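/- Let n ≥ 6. For a generic choice of linear subspaces L, M, N ⊂ ℂ^{n+1} of dimensions n−3, n−2, n−2 respectively (codimensions 4, 3, 3), of points l₁,l₂,l₃ ∈ L, m₁,…,m₄ ∈ M, and n₁,…,n₄ ∈ N, the only homogeneous cubic polynomial in ℂ[x₀,…,xₙ] that vanishes at every point of L ∪ M ∪ N and is singular at all eleven points l₁,l₂,l₃,m₁,…,m₄,n₁,…,n₄ is the zero polynomial. -/

import Mathlib

/-!
A cubic form is the same thing as a symmetric trilinear form `T`: by Euler's formula the array of
its third partial derivatives determines it. It is singular at `p` exactly when `T p p v = 0` for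
all `v`, and it vanishes on a subspace `L` exactly when `T` vanishes on `L × L × L`
(`SymTri.Van`). So the conditions on the cubic are linear equations in the coefficients of `T`,
with coefficients polynomial in the parameters of the configuration.

A linear system depending polynomially on parameters that has only the zero solution at one
parameter value has only the zero solution outside the zero set of a maximal minor
(`generic_of_special`). Injectivity of the three matrices is treated in the same way, so it
suffices to exhibit for each `n ≥ 6` a single configuration for which `T = 0`. By
`generic_of_config` this configuration may live in any vector space of dimension `n + 1`.

The special configurations consist of subspaces spanned by coordinate vectors and by sums of two
of them, with one configuration for `n = 6`, one for `n = 7`, and one for all `n ≥ 8`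
(`core6`, `core7`, `core8`). Two remarks reduce the verification to a small computation. If
`M + N` is the whole space and `x, y ∈ M ∩ N`, then `T x y v = 0` for every `v`
(`SymTri.van_pair`). Hence, if `x`, `y` lie in such intersections or are themselves singular
points, a singular point at `x + y` gives `T x y v = 0` for every `v`. In the case `n ≥ 8` all
three subspaces contain the `n - 8` extra coordinate vectors, which `SymTri.van_pair` disposes of
uniformly.
-/

open MvPolynomial

noncomputable section

/-- The linear form `a₀x₀ + ⋯ + aₙxₙ` with coefficient vector `a`. -/
def linForm {n : ℕ} (a : Fin (n + 1) → ℂ) : MvPolynomial (Fin (n + 1)) ℂ :=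
  ∑ i, C (a i) * X i

/-- Evaluation at the point `v`, as a linear map. -/
def evalAt {n : ℕ} (v : Fin (n + 1) → ℂ) : MvPolynomial (Fin (n + 1)) ℂ →ₗ[ℂ] ℂ :=
  (aeval v).toLinearMap

/-- The linear map `f ↦ (∂f/∂xᵢ)(p)`. -/
def evalPDeriv {n : ℕ} (p : Fin (n + 1) → ℂ) (i : Fin (n + 1)) :
    MvPolynomial (Fin (n + 1)) ℂ →ₗ[ℂ] ℂ :=
  evalAt p ∘ₗ (pderiv i).toLinearMap

/-- `f` is singular at `p`: all partial derivatives of `f` vanish at `p`. -/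
def SingularAt {n : ℕ} (f : MvPolynomial (Fin (n + 1)) ℂ) (p : Fin (n + 1) → ℂ) : Prop :=
  ∀ i, evalPDeriv p i f = 0

/-- The space of homogeneous degree-`d` polynomials in `n+1` variables that vanish at every
point of `V` and are singular at every point of `S`. -/
def SingSpace (n : ℕ) (d : ℕ) (S V : Set (Fin (n + 1) → ℂ)) :
    Submodule ℂ (MvPolynomial (Fin (n + 1)) ℂ) :=
  homogeneousSubmodule (Fin (n + 1)) ℂ d ⊓ (⨅ v ∈ V, LinearMap.ker (evalAt v)) ⊓
    ⨅ p ∈ S, ⨅ i, LinearMap.ker (evalPDeriv p i)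

/-- A property of parameters `t : ι → ℂ` holds for a generic choice of `t` if there is a
nonzero polynomial `F` in the variables `ι` such that the property holds whenever
`F(t) ≠ 0`. -/
def Generic {ι : Type} [Fintype ι] (P : (ι → ℂ) → Prop) : Prop :=
  ∃ F : MvPolynomial ι ℂ, F ≠ 0 ∧ ∀ t : ι → ℂ, eval t F ≠ 0 → P t

end

/-! ### Symmetric trilinear forms -/

/-- A symmetric trilinear form on a complex vector space. -/
structure SymTri (V : Type) [AddCommGroup V] [Module ℂ V] where
  /-- the underlying trilinear map -/
  T : V →ₗ[ℂ] V →ₗ[ℂ] V →ₗ[ℂ] ℂ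
  h12 : ∀ u v w, T u v w = T v u w
  h23 : ∀ u v w, T u v w = T u w v

namespace SymTri

variable {V : Type} [AddCommGroup V] [Module ℂ V] (S : SymTri V)

/-- The form vanishes identically on `L × L × L`; equivalently, its cubic form vanishes on `L`. -/
def Van (L : Submodule ℂ V) : Prop := ∀ u ∈ L, ∀ v ∈ L, ∀ w ∈ L, S.T u v w = 0

/-- By symmetry it is enough to check triples of spanning vectors that are sorted with respect to a
rank function `r`; ties are allowed. -/
theorem eq_zero_of_span {ι : Type*} (e : ι → V) (r : ι → ℕ)
    (hspan : Submodule.span ℂ (Set.range e) = ⊤)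
    (h : ∀ i j k, r i ≤ r j → r j ≤ r k → S.T (e i) (e j) (e k) = 0) : S.T = 0 := by
  have h' : ∀ i j k, S.T (e i) (e j) (e k) = 0 := by
    intro i j k
    have c1 := S.h12 (e i) (e j) (e k)
    have c2 := S.h23 (e i) (e j) (e k)
    have c3 := S.h23 (e j) (e i) (e k)
    have c4 := S.h12 (e i) (e k) (e j)
    have c5 := S.h23 (e k) (e i) (e j)
    rcases le_total (r i) (r j) with a | a <;> rcases le_total (r j) (r k) with b | b <;>
      rcases le_total (r i) (r k) with c | c <;>
      first
        | exact h _ _ _ a b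
        | rw [c2]; exact h _ _ _ c b
        | rw [c2, c4]; exact h _ _ _ c a
        | rw [c1]; exact h _ _ _ a c
        | rw [c1, c3]; exact h _ _ _ b c
        | rw [c2, c4, c5]; exact h _ _ _ b a
  refine LinearMap.ext_on_range hspan fun i => ?_
  refine LinearMap.ext_on_range hspan fun j => ?_
  refine LinearMap.ext_on_range hspan fun k => ?_
  simpa using h' i j k

/-- Decompose `v` into a part in `M` and a part in `N`: each of the two triples lies in a single
subspace on which the form vanishes. -/
theorem van_pair {M N : Submodule ℂ V} (hM : S.Van M) (hN : S.Van N) (h : M ⊔ N = ⊤)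
    {x y : V} (xM : x ∈ M) (xN : x ∈ N) (yM : y ∈ M) (yN : y ∈ N) (v : V) : S.T x y v = 0 := by
  obtain ⟨m, hm, n, hn, rfl⟩ := Submodule.mem_sup.1 (h ▸ Submodule.mem_top : v ∈ M ⊔ N)
  rw [map_add, hM x xM y yM m hm, hN x xN y yN n hn, add_zero]

end SymTri

/-! ### The configuration for `n = 6` -/

/-- The computational core of `core6`. Here `x i j k` and `y i j k` stand for `T (p i) (p j) (q k)`
and `T (p i) (q j) (q k)`; `hn` says that the cubic vanishes on the span of the `p i + q i`, the
hypotheses `l`, `m` and `n` come from the singular points on `L`, `M` and `N`. -/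
theorem lin6 (x y : Fin 3 → Fin 3 → Fin 3 → ℂ)
    (xs : ∀ i j k, x i j k = x j i k) (ys : ∀ i j k, y i j k = y i k j)
    (hn : ∀ i j k, x i j k + x i k j + x j k i + y i j k + y j i k + y k i j = 0)
    (l0 : ∀ k, x 1 2 k = 0) (l1 : ∀ k, x 1 1 k + x 2 2 k = 0)
    (l2 : ∀ k, x 0 0 k + x 2 2 k = 2 * x 0 2 k)
    (m0 : ∀ k, y k 0 0 = 0) (m1 : ∀ k, y k 1 1 = 0)
    (n0 : ∀ k, 2 * x 2 k 2 + y k 2 2 = 0)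
    (n1 : ∀ k, x 0 k 1 + x 1 k 0 + y k 0 1 = 0)
    (n2 : ∀ k, 2 * x 0 k 0 + y k 0 0 + (2 * x 1 k 1 + y k 1 1) = 0)
    (n3 : ∀ k, x 0 k 2 + x 2 k 0 + y k 0 2 = x 1 k 2 + x 2 k 1 + y k 1 2) :
    (∀ i j k, x i j k = 0) ∧ ∀ i j k, y i j k = 0 := by
  have h := And.intro (hn 0 0 0) <| And.intro (hn 0 0 1) <| And.intro (hn 0 0 2) <|
    And.intro (hn 0 1 1) <| And.intro (hn 0 1 2) <| And.intro (hn 0 2 2) <|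
    And.intro (hn 1 1 1) <| And.intro (hn 1 1 2) <| And.intro (hn 1 2 2) (hn 2 2 2)
  simp only [l0, m0, m1] at h n0 n1 n2 n3
  have x02 : ∀ k, x 0 2 k = (x 0 0 k + x 2 2 k) / 2 := fun k => by linear_combination - l2 k / 2
  have x11 : ∀ k, x 1 1 k = - x 2 2 k := fun k => by linear_combination l1 k
  have y22 : ∀ k, y k 2 2 = - 2 * x 2 k 2 := fun k => by linear_combination n0 k
  have y01 : ∀ k, y k 0 1 = - x 0 k 1 - x 1 k 0 := fun k => by linear_combination n1 k
  have y02 : ∀ k, y k 0 2 = x 1 k 2 + x 2 k 1 + y k 1 2 - x 0 k 2 - x 2 k 0 :=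
    fun k => by linear_combination n3 k
  have n20 := n2 0
  have n21 := n2 1
  have n22 := n2 2
  simp only [y22, y01, y02, xs 1 0, xs 2 0, xs 2 1, l0, x11, x02] at h n20 n21 n22
  have X00 : x 0 0 0 = 0 ∧ x 0 0 1 = 0 ∧ x 0 0 2 = 0 := by
    refine ⟨?_, ?_, ?_⟩ <;> grind only
  have X01 : x 0 1 0 = 0 ∧ x 0 1 1 = 0 ∧ x 0 1 2 = 0 := by
    refine ⟨?_, ?_, ?_⟩ <;> grind only
  have X22 : x 2 2 0 = 0 ∧ x 2 2 1 = 0 ∧ x 2 2 2 = 0 := by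
    refine ⟨?_, ?_, ?_⟩ <;> grind only
  have Y12 : y 0 1 2 = 0 ∧ y 1 1 2 = 0 ∧ y 2 1 2 = 0 := by
    refine ⟨?_, ?_, ?_⟩ <;> grind only
  have X : ∀ i j k, x i j k = 0 := by
    simp [Fin.forall_fin_succ, xs 1 0, xs 2 0, xs 2 1, l0, x11, x02, X00, X01, X22]
  refine ⟨X, ?_⟩
  simp [Fin.forall_fin_succ, ys _ 1 0, ys _ 2 0, ys _ 2 1, m0, m1, y22, y01, y02, X, Y12]

/-- With `p 0, p 1, p 2, q 0, q 1, q 2, h` a basis of a space of dimension 7, take `L = ⟨p i⟩`,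
`M = ⟨q i, h⟩` and `N = ⟨p i + q i, h⟩`. A cubic vanishing on the three subspaces and singular at
the eleven listed points is zero. -/
theorem core6 {V : Type} [AddCommGroup V] [Module ℂ V] (S : SymTri V) (L M N : Submodule ℂ V)
    (hL : S.Van L) (hM : S.Van M) (hN : S.Van N) (p q : Fin 3 → V) (h : V)
    (hspan : Submodule.span ℂ (Set.range (Sum.elim p (Sum.elim q fun _ : Unit => h))) = ⊤)
    (pL : ∀ i, p i ∈ L) (qM : ∀ i, q i ∈ M) (rN : ∀ i, p i + q i ∈ N) (hhM : h ∈ M) (hhN : h ∈ N)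
    (l0 : ∀ v, S.T (p 1 + p 2) (p 1 + p 2) v = 0)
    (l1 : ∀ v, S.T (p 1 - p 2) (p 1 - p 2) v = 0)
    (l2 : ∀ v, S.T (p 0 - p 2) (p 0 - p 2) v = 0)
    (m0 : ∀ v, S.T (q 0) (q 0) v = 0)
    (m1 : ∀ v, S.T (q 1) (q 1) v = 0)
    (m2 : ∀ v, S.T (q 0 + h) (q 0 + h) v = 0)
    (m3 : ∀ v, S.T (q 1 + h) (q 1 + h) v = 0)
    (n0 : ∀ v, S.T (p 2 + q 2) (p 2 + q 2) v = 0)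
    (n1 : ∀ v, S.T (p 0 + q 0 + (p 1 + q 1)) (p 0 + q 0 + (p 1 + q 1)) v = 0)
    (n2 : ∀ v, S.T (p 0 + q 0 - (p 1 + q 1)) (p 0 + q 0 - (p 1 + q 1)) v = 0)
    (n3 : ∀ v, S.T (p 0 + q 0 - (p 1 + q 1) + (p 2 + q 2))
      (p 0 + q 0 - (p 1 + q 1) + (p 2 + q 2)) v = 0) : S.T = 0 := by
  obtain ⟨T, h12, h23⟩ := S
  dsimp only at *
  have hMN : M ⊔ N = ⊤ := by
    rw [eq_top_iff, ← hspan, Submodule.span_le]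
    rintro _ ⟨i | i | i, rfl⟩
    · have := Submodule.add_mem_sup (neg_mem (qM i)) (rN i)
      simpa using this
    · exact Submodule.mem_sup_left (qM i)
    · exact Submodule.mem_sup_left hhM
  have hh : ∀ v, T h h v = 0 := SymTri.van_pair ⟨T, h12, h23⟩ hM hN hMN hhM hhN hhM hhN
  have ppp : ∀ i j k, T (p i) (p j) (p k) = 0 := fun i j k =>
    hL _ (pL i) _ (pL j) _ (pL k)
  have qqq : ∀ i j k, T (q i) (q j) (q k) = 0 := fun i j k =>
    hM _ (qM i) _ (qM j) _ (qM k)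
  have qqh : ∀ i j, T (q i) (q j) h = 0 := fun i j => hM _ (qM i) _ (qM j) _ hhM
  have rrr := fun i j k => hN _ (rN i) _ (rN j) _ (rN k)
  have rrh := fun i j => hN _ (rN i) _ (rN j) _ hhN
  -- Polarise: each hypothesis on a singular point becomes a relation between basis vectors.
  simp only [map_add, map_sub, LinearMap.add_apply, LinearMap.sub_apply] at *
  have pp12 : ∀ v, T (p 1) (p 2) v = 0 := fun v => by
    linear_combination (l0 v - l1 v) / 4 + h12 (p 1) (p 2) v / 2
  have pp11 : ∀ v, T (p 1) (p 1) v + T (p 2) (p 2) v = 0 := fun v => by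
    linear_combination (l0 v + l1 v) / 2
  have pp02 : ∀ v, T (p 0) (p 0) v + T (p 2) (p 2) v = 2 * T (p 0) (p 2) v := fun v => by
    linear_combination l2 v - h12 (p 0) (p 2) v
  have q0h : ∀ v, T (q 0) h v = 0 := fun v => by
    linear_combination (m2 v - m0 v - hh v + h12 (q 0) h v) / 2
  have q1h : ∀ v, T (q 1) h v = 0 := fun v => by
    linear_combination (m3 v - m1 v - hh v + h12 (q 1) h v) / 2
  have rr01 : ∀ v, T (p 0) (p 1) v + T (p 0) (q 1) v + T (p 1) (q 0) v + T (q 0) (q 1) v = 0 :=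
    fun v => by
    linear_combination (n1 v - n2 v) / 4 + (h12 (p 0) (p 1) v + h12 (p 0) (q 1) v +
      h12 (q 0) (q 1) v + h12 (p 1) (q 0) v) / 2
  have rr0011 : ∀ v, T (p 0) (p 0) v + 2 * T (p 0) (q 0) v + T (q 0) (q 0) v +
      (T (p 1) (p 1) v + 2 * T (p 1) (q 1) v + T (q 1) (q 1) v) = 0 := fun v => by
    linear_combination (n1 v + n2 v) / 2 + h12 (p 0) (q 0) v + h12 (p 1) (q 1) v
  have rr02 : ∀ v, T (p 0) (p 2) v + T (p 0) (q 2) v + T (p 2) (q 0) v + T (q 0) (q 2) v =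
      T (p 1) (p 2) v + T (p 1) (q 2) v + T (p 2) (q 1) v + T (q 1) (q 2) v := fun v => by
    linear_combination (n3 v - n2 v - n0 v) / 2 + (h12 (p 0) (p 2) v + h12 (p 0) (q 2) v +
      h12 (q 0) (q 2) v + h12 (p 2) (q 0) v) / 2 - (h12 (p 1) (p 2) v + h12 (p 1) (q 2) v +
      h12 (q 1) (q 2) v + h12 (p 2) (q 1) v) / 2
  have pqp : ∀ i j k, T (p i) (q j) (p k) = T (p i) (p k) (q j) := fun i j k => h23 _ _ _
  have qqp : ∀ i j k, T (q i) (q j) (p k) = T (p k) (q i) (q j) := fun i j k => by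
    rw [h23, h12]
  have qpp : ∀ i j k, T (q i) (p j) (p k) = T (p j) (p k) (q i) := fun i j k => by
    rw [h12, h23]
  have qpq : ∀ i j k, T (q i) (p j) (q k) = T (p j) (q i) (q k) := fun i j k => h12 _ _ _
  obtain ⟨ppq, pqq⟩ := lin6 (fun i j k => T (p i) (p j) (q k)) (fun i j k => T (p i) (q j) (q k))
    (fun i j k => h12 _ _ _) (fun i j k => h23 _ _ _)
    (fun i j k => by
      have := rrr i j k
      simp only [pqp, qpp, qqp, qpq, ppp, qqq] at this
      linear_combination this)
    (fun k => pp12 _) (fun k => pp11 _) (fun k => pp02 _)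
    (fun k => by simpa only [qqp] using m0 (p k))
    (fun k => by simpa only [qqp] using m1 (p k))
    (fun k => by
      have := n0 (p k)
      simp only [pqp, qpp, qqp, ppp] at this
      linear_combination this)
    (fun k => by
      have := rr01 (p k)
      simp only [pqp, qqp, ppp] at this
      linear_combination this)
    (fun k => by
      have := rr0011 (p k)
      simp only [pqp, qqp, ppp] at this
      linear_combination this)
    (fun k => by
      have := rr02 (p k)
      simp only [pqp, qqp, ppp] at this
      linear_combination this)
  -- What remains are the triples that involve `h` exactly once.
  have pq0h : ∀ i, T (p i) (q 0) h = 0 := fun i => by rw [h12, h23]; exact q0h _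
  have pq1h : ∀ i, T (p i) (q 1) h = 0 := fun i => by rw [h12, h23]; exact q1h _
  have pph' : ∀ i j, T (p i) (p j) h = - (T (p i) (q j) h + T (p j) (q i) h) := fun i j => by
    linear_combination rrh i j - h12 (q i) (p j) h - qqh i j
  have pqh : ∀ i j, T (p i) (q j) h = 0 := by
    have e1 := pp12 h
    have e2 := pp11 h
    have e3 := pp02 h
    simp only [pph', pq0h, pq1h] at e1 e2 e3
    have f2 : T (p 2) (q 2) h = 0 := by linear_combination - e2 / 2
    have f1 : T (p 1) (q 2) h = 0 := by linear_combination - e1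
    have f0 : T (p 0) (q 2) h = 0 := by linear_combination (e3 + 2 * f2) / 2
    simp [Fin.forall_fin_succ, pq0h, pq1h, f0, f1, f2]
  have pph : ∀ i j, T (p i) (p j) h = 0 := fun i j => by rw [pph', pqh, pqh]; simp
  refine SymTri.eq_zero_of_span ⟨T, h12, h23⟩ _
    (Sum.elim (fun _ => 0) (Sum.elim (fun _ => 1) fun _ => 2)) hspan ?_
  have vhh : ∀ v, T v h h = 0 := fun v => by rw [h12, h23]; exact hh v
  rintro (i | i | i) (j | j | j) (k | k | k) <;>
    simp [ppp, ppq, pph, pqq, pqh, vhh, qqq, qqh]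

/-! ### The configuration for `n = 7` -/

set_option linter.unusedSimpArgs false in
set_option maxHeartbeats 1000000 in
/-- With `c0, c1, b, a, p0, p1, q0, q1` a basis of a space of dimension 8, take
`L = ⟨b, a, p0, p1⟩`, `M = ⟨c0, c1, a, q0, q1⟩` and `N = ⟨c0, c1, b, p0 + q0, p1 + q1⟩`. A cubic
vanishing on the three subspaces and singular at the eleven listed points is zero. -/
theorem core7 {V : Type} [AddCommGroup V] [Module ℂ V] (S : SymTri V) (L M N : Submodule ℂ V)
    (hL : S.Van L) (hM : S.Van M) (hN : S.Van N) (c0 c1 b a p0 p1 q0 q1 : V)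
    (hspan : Submodule.span ℂ (Set.range ![c0, c1, b, a, p0, p1, q0, q1]) = ⊤)
    (bL : b ∈ L) (aL : a ∈ L) (p0L : p0 ∈ L) (p1L : p1 ∈ L)
    (c0M : c0 ∈ M) (c1M : c1 ∈ M) (aM : a ∈ M) (q0M : q0 ∈ M) (q1M : q1 ∈ M)
    (c0N : c0 ∈ N) (c1N : c1 ∈ N) (bN : b ∈ N) (r0N : p0 + q0 ∈ N) (r1N : p1 + q1 ∈ N)
    (l0 : ∀ v, S.T (p0 + p1) (p0 + p1) v = 0)
    (l1 : ∀ v, S.T (p0 - p1) (p0 - p1) v = 0)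
    (l2 : ∀ v, S.T (p0 + p1 + a + b) (p0 + p1 + a + b) v = 0)
    (m0 : ∀ v, S.T q0 q0 v = 0)
    (m1 : ∀ v, S.T (c0 + q0) (c0 + q0) v = 0)
    (m2 : ∀ v, S.T (q0 + a) (q0 + a) v = 0)
    (m3 : ∀ v, S.T (c0 + q0 + a) (c0 + q0 + a) v = 0)
    (n0 : ∀ v, S.T (p1 + q1) (p1 + q1) v = 0)
    (n1 : ∀ v, S.T (c1 + (p1 + q1)) (c1 + (p1 + q1)) v = 0)
    (n2 : ∀ v, S.T (p1 + q1 + b) (p1 + q1 + b) v = 0)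
    (n3 : ∀ v, S.T (c1 + (p1 + q1) + b) (c1 + (p1 + q1) + b) v = 0) : S.T = 0 := by
  obtain ⟨T, h12, h23⟩ := S
  dsimp only at *
  have key : ∀ K : Submodule ℂ V, c0 ∈ K → c1 ∈ K → b ∈ K → a ∈ K → p0 ∈ K → p1 ∈ K → q0 ∈ K →
      q1 ∈ K → K = ⊤ := by
    intro K h0 h1 h2 h3 h4 h5 h6 h7
    rw [eq_top_iff, ← hspan, Submodule.span_le]
    rintro _ ⟨i, rfl⟩
    fin_cases i <;> assumption
  have hMN : M ⊔ N = ⊤ := by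
    have hp : ∀ p q : V, q ∈ M → p + q ∈ N → p ∈ M ⊔ N := fun p q hq hr => by
      simpa using Submodule.add_mem_sup (neg_mem hq) hr
    exact key _ (Submodule.mem_sup_left c0M) (Submodule.mem_sup_left c1M)
      (Submodule.mem_sup_right bN) (Submodule.mem_sup_left aM) (hp _ _ q0M r0N) (hp _ _ q1M r1N)
      (Submodule.mem_sup_left q0M) (Submodule.mem_sup_left q1M)
  have hLM : L ⊔ M = ⊤ :=
    key _ (Submodule.mem_sup_right c0M) (Submodule.mem_sup_right c1M)
      (Submodule.mem_sup_left bL) (Submodule.mem_sup_left aL) (Submodule.mem_sup_left p0L)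
      (Submodule.mem_sup_left p1L) (Submodule.mem_sup_right q0M) (Submodule.mem_sup_right q1M)
  have hLN : L ⊔ N = ⊤ := by
    have hq : ∀ p q : V, p ∈ L → p + q ∈ N → q ∈ L ⊔ N := fun p q hq hr => by
      simpa using Submodule.add_mem_sup (neg_mem hq) hr
    exact key _ (Submodule.mem_sup_right c0N) (Submodule.mem_sup_right c1N)
      (Submodule.mem_sup_left bL) (Submodule.mem_sup_left aL) (Submodule.mem_sup_left p0L)
      (Submodule.mem_sup_left p1L) (hq _ _ p0L r0N) (hq _ _ p1L r1N)
  have c00 := SymTri.van_pair ⟨T, h12, h23⟩ hM hN hMN c0M c0N c0M c0N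
  have c01 := SymTri.van_pair ⟨T, h12, h23⟩ hM hN hMN c0M c0N c1M c1N
  have c11 := SymTri.van_pair ⟨T, h12, h23⟩ hM hN hMN c1M c1N c1M c1N
  have bb := SymTri.van_pair ⟨T, h12, h23⟩ hL hN hLN bL bN bL bN
  have aa := SymTri.van_pair ⟨T, h12, h23⟩ hL hM hLM aL aM aL aM
  -- Polarise: each hypothesis on a singular point becomes a relation between basis vectors.
  simp only [map_add, map_sub, LinearMap.add_apply, LinearMap.sub_apply] at *
  have pp01 : ∀ v, T p0 p1 v = 0 := fun v => by
    linear_combination (l0 v - l1 v) / 4 + h12 p0 p1 v / 2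
  have c0q0 : ∀ v, T c0 q0 v = 0 := fun v => by
    linear_combination (m1 v - m0 v - c00 v + h12 c0 q0 v) / 2
  have aq0 : ∀ v, T a q0 v = 0 := fun v => by
    linear_combination (m2 v - m0 v - aa v + h12 a q0 v) / 2
  have c0a : ∀ v, T c0 a v = 0 := fun v => by
    linear_combination (m3 v - m1 v - m2 v + m0 v + h12 c0 a v) / 2
  have c1r1 : ∀ v, T c1 p1 v + T c1 q1 v = 0 := fun v => by
    linear_combination (n1 v - n0 v - c11 v + h12 c1 p1 v + h12 c1 q1 v) / 2
  have br1 : ∀ v, T b p1 v + T b q1 v = 0 := fun v => by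
    linear_combination (n2 v - n0 v - bb v + h12 b p1 v + h12 b q1 v) / 2
  have c1b : ∀ v, T c1 b v = 0 := fun v => by
    linear_combination (n3 v - n1 v - n2 v + n0 v + h12 c1 b v) / 2
  have ab : ∀ v, T b a v + T a p0 v + T a p1 v + T b p0 v + T b p1 v = 0 := fun v => by
    linear_combination (l2 v - l0 v - aa v - bb v + h12 b a v + h12 a p0 v + h12 a p1 v +
      h12 b p0 v + h12 b p1 v) / 2
  have pp : ∀ v, T p0 p0 v + T p1 p1 v = 0 := fun v => by
    linear_combination (l0 v + l1 v) / 2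
  -- In the `linear_combination`s below, `h12` and `h23` are used by `simp` as ordered rewrite rules
  -- that sort the three arguments of `T`, so that equal monomials become syntactically equal.
  have c0bp0 : T c0 b p0 = 0 := by
    linear_combination (norm := ((try simp only [h12, h23, map_add, LinearMap.add_apply]); ring))
      (hN c0 c0N b bN _ r0N) - c0q0 b
  have c0bp1 : T c0 b p1 = 0 := by
    linear_combination (norm := ((try simp only [h12, h23, map_add, LinearMap.add_apply]); ring))
      ab c0 - c0a b - c0a p0 - c0a p1 - c0bp0
  have c0bq1 : T c0 b q1 = 0 := by
    linear_combination (norm := ((try simp only [h12, h23, map_add, LinearMap.add_apply]); ring))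
      (hN c0 c0N b bN _ r1N) - c0bp1
  have c1ap1 : T c1 a p1 = 0 := by
    linear_combination (norm := ((try simp only [h12, h23, map_add, LinearMap.add_apply]); ring))
      c1r1 a - (hM c1 c1M a aM q1 q1M)
  have c1ap0 : T c1 a p0 = 0 := by
    linear_combination (norm := ((try simp only [h12, h23, map_add, LinearMap.add_apply]); ring))
      ab c1 - c1b a - c1ap1 - c1b p0 - c1b p1
  have c0p0p0 : T c0 p0 p0 = 0 := by
    linear_combination (norm := ((try simp only [h12, h23, map_add, LinearMap.add_apply]); ring))
      (hN c0 c0N _ r0N _ r0N) - 2 * c0q0 p0 - c0q0 q0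
  have c0p1p1 : T c0 p1 p1 = 0 := by
    linear_combination (norm := ((try simp only [h12, h23, map_add, LinearMap.add_apply]); ring))
      pp c0 - c0p0p0
  have c0p1q1 : T c0 p1 q1 = 0 := by
    linear_combination (norm := ((try simp only [h12, h23, map_add, LinearMap.add_apply]); ring))
      (n0 c0 - c0p1p1 - (hM c0 c0M q1 q1M q1 q1M)) / 2
  have c0p0q1 : T c0 p0 q1 = 0 := by
    linear_combination (norm := ((try simp only [h12, h23, map_add, LinearMap.add_apply]); ring))
      (hN c0 c0N _ r0N _ r1N) - pp01 c0 - c0q0 p1 - c0q0 q1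
  have c1p1q0 : T c1 p1 q0 = 0 := by
    linear_combination (norm := ((try simp only [h12, h23, map_add, LinearMap.add_apply]); ring))
      c1r1 q0 - (hM c1 c1M q0 q0M q1 q1M)
  have c1p1q1 : T c1 p1 q1 = 0 := by
    linear_combination (norm := ((try simp only [h12, h23, map_add, LinearMap.add_apply]); ring))
      c1r1 q1 - (hM c1 c1M q1 q1M q1 q1M)
  have c1p1p1 : T c1 p1 p1 = 0 := by
    linear_combination (norm := ((try simp only [h12, h23, map_add, LinearMap.add_apply]); ring))
      c1r1 p1 - c1p1q1
  have c1p0p0 : T c1 p0 p0 = 0 := by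
    linear_combination (norm := ((try simp only [h12, h23, map_add, LinearMap.add_apply]); ring))
      pp c1 - c1p1p1
  have c1p0q0 : T c1 p0 q0 = 0 := by
    linear_combination (norm := ((try simp only [h12, h23, map_add, LinearMap.add_apply]); ring))
      ((hN c1 c1N _ r0N _ r0N) - c1p0p0 - (hM c1 c1M q0 q0M q0 q0M)) / 2
  have c1p0q1 : T c1 p0 q1 = 0 := by
    linear_combination (norm := ((try simp only [h12, h23, map_add, LinearMap.add_apply]); ring))
      c1r1 p0 - pp01 c1
  have baq1 : T b a q1 = 0 := by
    linear_combination (norm := ((try simp only [h12, h23, map_add, LinearMap.add_apply]); ring))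
      br1 a - (hL b bL a aL p1 p1L)
  have bp0q1 : T b p0 q1 = 0 := by
    linear_combination (norm := ((try simp only [h12, h23, map_add, LinearMap.add_apply]); ring))
      br1 p0 - pp01 b
  have bp1q1 : T b p1 q1 = 0 := by
    linear_combination (norm := ((try simp only [h12, h23, map_add, LinearMap.add_apply]); ring))
      br1 p1 - (hL b bL p1 p1L p1 p1L)
  have bq1q1 : T b q1 q1 = 0 := by
    linear_combination (norm := ((try simp only [h12, h23, map_add, LinearMap.add_apply]); ring))
      br1 q1 - bp1q1
  have bp0q0 : T b p0 q0 = 0 := by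
    linear_combination (norm := ((try simp only [h12, h23, map_add, LinearMap.add_apply]); ring))
      ((hN b bN _ r0N _ r0N) - (hL b bL p0 p0L p0 p0L) - m0 b) / 2
  have bp1q0 : T b p1 q0 = 0 := by
    linear_combination (norm := ((try simp only [h12, h23, map_add, LinearMap.add_apply]); ring))
      ab q0 - aq0 b - aq0 p0 - aq0 p1 - bp0q0
  have bq0q1 : T b q0 q1 = 0 := by
    linear_combination (norm := ((try simp only [h12, h23, map_add, LinearMap.add_apply]); ring))
      br1 q0 - bp1q0
  have ap1q1 : T a p1 q1 = 0 := by
    linear_combination (norm := ((try simp only [h12, h23, map_add, LinearMap.add_apply]); ring))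
      (n0 a - (hL a aL p1 p1L p1 p1L) - (hM a aM q1 q1M q1 q1M)) / 2
  have ap0q1 : T a p0 q1 = 0 := by
    linear_combination (norm := ((try simp only [h12, h23, map_add, LinearMap.add_apply]); ring))
      ab q1 - baq1 - ap1q1 - bp0q1 - bp1q1
  have y011 : T p0 q1 q1 = 0 := by
    linear_combination (norm := ((try simp only [h12, h23, map_add, LinearMap.add_apply]); ring))
      n0 p0 - pp01 p1 - 2 * pp01 q1
  have x000 : T p0 p0 q0 = 0 := by
    linear_combination (norm := ((try simp only [h12, h23, map_add, LinearMap.add_apply]); ring))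
      ((hN _ r0N _ r0N _ r0N) - (hL p0 p0L p0 p0L p0 p0L) - 3 * m0 p0 - m0 q0) / 3
  have x110 : T p1 p1 q0 = 0 := by
    linear_combination (norm := ((try simp only [h12, h23, map_add, LinearMap.add_apply]); ring))
      pp q0 - x000
  have y101 : T p1 q0 q1 = 0 := by
    linear_combination (norm := ((try simp only [h12, h23, map_add, LinearMap.add_apply]); ring))
      (n0 q0 - x110 - (hM q1 q1M q1 q1M q0 q0M)) / 2
  have x111 : T p1 p1 q1 = 0 := by
    linear_combination (norm := ((try simp only [h12, h23, map_add, LinearMap.add_apply]); ring))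
      (2 * n0 p1 - n0 q1 - 2 * (hL p1 p1L p1 p1L p1 p1L) + (hM q1 q1M q1 q1M q1 q1M)) / 3
  have y111 : T p1 q1 q1 = 0 := by
    linear_combination (norm := ((try simp only [h12, h23, map_add, LinearMap.add_apply]); ring))
      n0 p1 - 2 * x111 - (hL p1 p1L p1 p1L p1 p1L)
  have x001 : T p0 p0 q1 = 0 := by
    linear_combination (norm := ((try simp only [h12, h23, map_add, LinearMap.add_apply]); ring))
      pp q1 - x111
  have y001 : T p0 q0 q1 = 0 := by
    linear_combination (norm := ((try simp only [h12, h23, map_add, LinearMap.add_apply]); ring))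
      ((hN _ r0N _ r0N _ r1N) - (hL p0 p0L p0 p0L p1 p1L) - x001 - 2 * pp01 q0 - m0 p1 - m0 q1) / 2
  -- A pair annihilating everything does so in every position of the three arguments.
  have perm : ∀ {x y : V}, (∀ v, T x y v = 0) → (∀ v, T x v y = 0) ∧ ∀ v, T v x y = 0 := fun h =>
    ⟨fun v => by rw [h23]; exact h v, fun v => by rw [h12, h23]; exact h v⟩
  have Lm : ∀ x ∈ L, ∀ y ∈ L, ∀ z ∈ L, T x y z = 0 := hL
  have Mm : ∀ x ∈ M, ∀ y ∈ M, ∀ z ∈ M, T x y z = 0 := hM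
  refine SymTri.eq_zero_of_span ⟨T, h12, h23⟩ _ (fun i : Fin 8 => i.val) hspan ?_
  simp [Fin.forall_fin_succ, c00, c01, c11, bb, aa, m0, c0q0, aq0, c0a, c1b, pp01,
    perm c00, perm c01, perm c11, perm bb, perm aa, perm m0, perm c0q0, perm aq0, perm c0a,
    perm c1b, perm pp01,
    c0bp0, c0bp1, c0bq1, c1ap1, c1ap0, c0p0p0, c0p1p1, c0p1q1, c0p0q1, c1p1q0, c1p1q1, c1p1p1,
    c1p0p0, c1p0q0, c1p0q1, baq1, bp0q1, bp1q1, bq1q1, bp0q0, bp1q0, bq0q1, ap1q1, ap0q1, y011,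
    x000, x110, y101, x111, y111, x001, y001,
    Lm, Mm, bL, aL, p0L, p1L, c0M, c1M, aM, q0M, q1M]

/-! ### The configurations for `n ≥ 8` -/

set_option linter.unusedSimpArgs false in
set_option maxHeartbeats 1000000 in
/-- With `c0, c1, c2, b0, b1, a0, a1, p, q` and the `w i` a basis of a space of dimension at
least 9, take `L = ⟨b0, b1, a0, a1, p, w i⟩`, `M = ⟨c0, c1, c2, a0, a1, q, w i⟩` and
`N = ⟨c0, c1, c2, b0, b1, p + q, w i⟩`. A cubic vanishing on the three subspaces and singular at
the eleven listed points is zero. -/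
theorem core8 {V κ : Type} [AddCommGroup V] [Module ℂ V] (S : SymTri V) (L M N : Submodule ℂ V)
    (hL : S.Van L) (hM : S.Van M) (hN : S.Van N) (c0 c1 c2 b0 b1 a0 a1 p q : V) (w : κ → V)
    (hspan : Submodule.span ℂ (Set.range (Sum.elim ![c0, c1, c2, b0, b1, a0, a1, p, q] w)) = ⊤)
    (b0L : b0 ∈ L) (b1L : b1 ∈ L) (a0L : a0 ∈ L) (a1L : a1 ∈ L) (pL : p ∈ L) (wL : ∀ i, w i ∈ L)
    (c0M : c0 ∈ M) (c1M : c1 ∈ M) (c2M : c2 ∈ M) (a0M : a0 ∈ M) (a1M : a1 ∈ M) (qM : q ∈ M)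
    (wM : ∀ i, w i ∈ M)
    (c0N : c0 ∈ N) (c1N : c1 ∈ N) (c2N : c2 ∈ N) (b0N : b0 ∈ N) (b1N : b1 ∈ N) (rN : p + q ∈ N)
    (wN : ∀ i, w i ∈ N)
    (l0 : ∀ v, S.T p p v = 0)
    (l1 : ∀ v, S.T (b0 + a0 + p) (b0 + a0 + p) v = 0)
    (l2 : ∀ v, S.T (b1 + a1 + p) (b1 + a1 + p) v = 0)
    (m0 : ∀ v, S.T (c0 + a0) (c0 + a0) v = 0)
    (m1 : ∀ v, S.T (c0 + a1) (c0 + a1) v = 0)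
    (m2 : ∀ v, S.T (c1 + a0) (c1 + a0) v = 0)
    (m3 : ∀ v, S.T (c1 + a1) (c1 + a1) v = 0)
    (n0 : ∀ v, S.T (c2 + b0) (c2 + b0) v = 0)
    (n1 : ∀ v, S.T (c2 + b1) (c2 + b1) v = 0)
    (n2 : ∀ v, S.T (p + q - b0) (p + q - b0) v = 0)
    (n3 : ∀ v, S.T (p + q - b1) (p + q - b1) v = 0) : S.T = 0 := by
  obtain ⟨T, h12, h23⟩ := S
  dsimp only at *
  have key : ∀ K : Submodule ℂ V, c0 ∈ K → c1 ∈ K → c2 ∈ K → b0 ∈ K → b1 ∈ K → a0 ∈ K → a1 ∈ K →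
      p ∈ K → q ∈ K → (∀ i, w i ∈ K) → K = ⊤ := by
    intro K h0 h1 h2 h3 h4 h5 h6 h7 h8 h9
    rw [eq_top_iff, ← hspan, Submodule.span_le]
    rintro _ ⟨i | i, rfl⟩
    · fin_cases i <;> assumption
    · exact h9 i
  have hMN : M ⊔ N = ⊤ := by
    have hp : p ∈ M ⊔ N := by simpa using Submodule.add_mem_sup (neg_mem qM) rN
    apply key _ <;> first
      | assumption
      | exact Submodule.mem_sup_left ‹_›
      | exact Submodule.mem_sup_right ‹_›
      | exact fun i => Submodule.mem_sup_left (wM i)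
  have hLM : L ⊔ M = ⊤ := by
    apply key _ <;> first
      | assumption
      | exact Submodule.mem_sup_left ‹_›
      | exact Submodule.mem_sup_right ‹_›
      | exact fun i => Submodule.mem_sup_left (wL i)
  have hLN : L ⊔ N = ⊤ := by
    have hq : q ∈ L ⊔ N := by simpa using Submodule.add_mem_sup (neg_mem pL) rN
    apply key _ <;> first
      | assumption
      | exact Submodule.mem_sup_left ‹_›
      | exact Submodule.mem_sup_right ‹_›
      | exact fun i => Submodule.mem_sup_left (wL i)
  have cc : ∀ {x y}, x ∈ M → x ∈ N → y ∈ M → y ∈ N → ∀ v, T x y v = 0 :=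
    SymTri.van_pair ⟨T, h12, h23⟩ hM hN hMN
  have bb : ∀ {x y}, x ∈ L → x ∈ N → y ∈ L → y ∈ N → ∀ v, T x y v = 0 :=
    SymTri.van_pair ⟨T, h12, h23⟩ hL hN hLN
  have aa : ∀ {x y}, x ∈ L → x ∈ M → y ∈ L → y ∈ M → ∀ v, T x y v = 0 :=
    SymTri.van_pair ⟨T, h12, h23⟩ hL hM hLM
  have c00 := cc c0M c0N c0M c0N
  have c01 := cc c0M c0N c1M c1N
  have c02 := cc c0M c0N c2M c2N
  have c11 := cc c1M c1N c1M c1N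
  have c12 := cc c1M c1N c2M c2N
  have c22 := cc c2M c2N c2M c2N
  have c0w : ∀ i v, T c0 (w i) v = 0 := fun i => cc c0M c0N (wM i) (wN i)
  have c1w : ∀ i v, T c1 (w i) v = 0 := fun i => cc c1M c1N (wM i) (wN i)
  have c2w : ∀ i v, T c2 (w i) v = 0 := fun i => cc c2M c2N (wM i) (wN i)
  have b00 := bb b0L b0N b0L b0N
  have b01 := bb b0L b0N b1L b1N
  have b11 := bb b1L b1N b1L b1N
  have b0w : ∀ i v, T b0 (w i) v = 0 := fun i => bb b0L b0N (wL i) (wN i)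
  have b1w : ∀ i v, T b1 (w i) v = 0 := fun i => bb b1L b1N (wL i) (wN i)
  have a00 := aa a0L a0M a0L a0M
  have a01 := aa a0L a0M a1L a1M
  have a11 := aa a1L a1M a1L a1M
  have a0w : ∀ i v, T a0 (w i) v = 0 := fun i => aa a0L a0M (wL i) (wM i)
  have a1w : ∀ i v, T a1 (w i) v = 0 := fun i => aa a1L a1M (wL i) (wM i)
  have ww : ∀ i j v, T (w i) (w j) v = 0 := fun i j => aa (wL i) (wM i) (wL j) (wM j)
  -- Polarise: each hypothesis on a singular point becomes a relation between basis vectors.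
  simp only [map_add, map_sub, LinearMap.add_apply, LinearMap.sub_apply] at *
  have c0a0 : ∀ v, T c0 a0 v = 0 := fun v => by
    linear_combination (m0 v - c00 v - a00 v + h12 c0 a0 v) / 2
  have c0a1 : ∀ v, T c0 a1 v = 0 := fun v => by
    linear_combination (m1 v - c00 v - a11 v + h12 c0 a1 v) / 2
  have c1a0 : ∀ v, T c1 a0 v = 0 := fun v => by
    linear_combination (m2 v - c11 v - a00 v + h12 c1 a0 v) / 2
  have c1a1 : ∀ v, T c1 a1 v = 0 := fun v => by
    linear_combination (m3 v - c11 v - a11 v + h12 c1 a1 v) / 2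
  have c2b0 : ∀ v, T c2 b0 v = 0 := fun v => by
    linear_combination (n0 v - c22 v - b00 v + h12 c2 b0 v) / 2
  have c2b1 : ∀ v, T c2 b1 v = 0 := fun v => by
    linear_combination (n1 v - c22 v - b11 v + h12 c2 b1 v) / 2
  have e0 : ∀ v, T b0 a0 v + T b0 p v + T a0 p v = 0 := fun v => by
    linear_combination (l1 v - b00 v - a00 v - l0 v + h12 b0 a0 v + h12 b0 p v + h12 a0 p v) / 2
  have d0 : ∀ v, T p p v + 2 * T p q v + T q q v = 2 * (T b0 p v + T b0 q v) := fun v => by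
    linear_combination n2 v - b00 v + h12 p q v - h12 b0 p v - h12 b0 q v
  have e1 : ∀ v, T b1 a1 v + T b1 p v + T a1 p v = 0 := fun v => by
    linear_combination (l2 v - b11 v - a11 v - l0 v + h12 b1 a1 v + h12 b1 p v + h12 a1 p v) / 2
  have d1 : ∀ v, T p p v + 2 * T p q v + T q q v = 2 * (T b1 p v + T b1 q v) := fun v => by
    linear_combination n3 v - b11 v + h12 p q v - h12 b1 p v - h12 b1 q v
  -- In the `linear_combination`s below, `h12` and `h23` are used by `simp` as ordered rewrite rules
  -- that sort the three arguments of `T`, so that equal monomials become syntactically equal.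
  have c0b0p : T c0 b0 p = 0 := by
    linear_combination (norm := ((try simp only [h12, h23, map_add, LinearMap.add_apply]); ring))
      e0 c0 - c0a0 b0 - c0a0 p
  have c0b0q : T c0 b0 q = 0 := by
    linear_combination (norm := ((try simp only [h12, h23, map_add, LinearMap.add_apply]); ring))
      (hN c0 c0N b0 b0N _ rN) - c0b0p
  have c0b1p : T c0 b1 p = 0 := by
    linear_combination (norm := ((try simp only [h12, h23, map_add, LinearMap.add_apply]); ring))
      e1 c0 - c0a1 b1 - c0a1 p
  have c0b1q : T c0 b1 q = 0 := by
    linear_combination (norm := ((try simp only [h12, h23, map_add, LinearMap.add_apply]); ring))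
      (hN c0 c0N b1 b1N _ rN) - c0b1p
  have c1b0p : T c1 b0 p = 0 := by
    linear_combination (norm := ((try simp only [h12, h23, map_add, LinearMap.add_apply]); ring))
      e0 c1 - c1a0 b0 - c1a0 p
  have c1b0q : T c1 b0 q = 0 := by
    linear_combination (norm := ((try simp only [h12, h23, map_add, LinearMap.add_apply]); ring))
      (hN c1 c1N b0 b0N _ rN) - c1b0p
  have c1b1p : T c1 b1 p = 0 := by
    linear_combination (norm := ((try simp only [h12, h23, map_add, LinearMap.add_apply]); ring))
      e1 c1 - c1a1 b1 - c1a1 p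
  have c1b1q : T c1 b1 q = 0 := by
    linear_combination (norm := ((try simp only [h12, h23, map_add, LinearMap.add_apply]); ring))
      (hN c1 c1N b1 b1N _ rN) - c1b1p
  have c2a0p : T c2 a0 p = 0 := by
    linear_combination (norm := ((try simp only [h12, h23, map_add, LinearMap.add_apply]); ring))
      e0 c2 - c2b0 a0 - c2b0 p
  have c2a1p : T c2 a1 p = 0 := by
    linear_combination (norm := ((try simp only [h12, h23, map_add, LinearMap.add_apply]); ring))
      e1 c2 - c2b1 a1 - c2b1 p
  have c0pq : T c0 p q = 0 := by
    linear_combination (norm := ((try simp only [h12, h23, map_add, LinearMap.add_apply]); ring))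
      ((hN c0 c0N _ rN _ rN) - l0 c0 - (hM c0 c0M q qM q qM)) / 2
  have c1pq : T c1 p q = 0 := by
    linear_combination (norm := ((try simp only [h12, h23, map_add, LinearMap.add_apply]); ring))
      ((hN c1 c1N _ rN _ rN) - l0 c1 - (hM c1 c1M q qM q qM)) / 2
  have c2pq : T c2 p q = 0 := by
    linear_combination (norm := ((try simp only [h12, h23, map_add, LinearMap.add_apply]); ring))
      ((hN c2 c2N _ rN _ rN) - l0 c2 - (hM c2 c2M q qM q qM)) / 2
  have pqq : T p q q = 0 := by
    linear_combination (norm := ((try simp only [h12, h23, map_add, LinearMap.add_apply]); ring))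
      ((hN _ rN _ rN _ rN) - l0 p - 3 * l0 q - (hM q qM q qM q qM)) / 3
  have b0pq : T b0 p q = 0 := by
    linear_combination (norm := ((try simp only [h12, h23, map_add, LinearMap.add_apply]); ring))
      (l0 p + 2 * l0 q + pqq - d0 p - 2 * l0 b0) / 2
  have b0qq : T b0 q q = 0 := by
    linear_combination (norm := ((try simp only [h12, h23, map_add, LinearMap.add_apply]); ring))
      (hN b0 b0N _ rN _ rN) - l0 b0 - 2 * b0pq
  have b1pq : T b1 p q = 0 := by
    linear_combination (norm := ((try simp only [h12, h23, map_add, LinearMap.add_apply]); ring))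
      (l0 p + 2 * l0 q + pqq - d1 p - 2 * l0 b1) / 2
  have b1qq : T b1 q q = 0 := by
    linear_combination (norm := ((try simp only [h12, h23, map_add, LinearMap.add_apply]); ring))
      (hN b1 b1N _ rN _ rN) - l0 b1 - 2 * b1pq
  have a0pq : T a0 p q = 0 := by
    linear_combination (norm := ((try simp only [h12, h23, map_add, LinearMap.add_apply]); ring))
      (e0 q - b0pq + (d0 a0 - l0 a0 - (hM a0 a0M q qM q qM) + 2 * (hL b0 b0L a0 a0L p pL)) / 2) / 2
  have b0a0q : T b0 a0 q = 0 := by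
    linear_combination (norm := ((try simp only [h12, h23, map_add, LinearMap.add_apply]); ring))
      a0pq - (d0 a0 - l0 a0 - (hM a0 a0M q qM q qM) + 2 * (hL b0 b0L a0 a0L p pL)) / 2
  have b1a0q : T b1 a0 q = 0 := by
    linear_combination (norm := ((try simp only [h12, h23, map_add, LinearMap.add_apply]); ring))
      a0pq - (d1 a0 - l0 a0 - (hM a0 a0M q qM q qM) + 2 * (hL b1 b1L a0 a0L p pL)) / 2
  have a1pq : T a1 p q = 0 := by
    linear_combination (norm := ((try simp only [h12, h23, map_add, LinearMap.add_apply]); ring))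
      (e1 q - b1pq + (d1 a1 - l0 a1 - (hM a1 a1M q qM q qM) + 2 * (hL b1 b1L a1 a1L p pL)) / 2) / 2
  have b0a1q : T b0 a1 q = 0 := by
    linear_combination (norm := ((try simp only [h12, h23, map_add, LinearMap.add_apply]); ring))
      a1pq - (d0 a1 - l0 a1 - (hM a1 a1M q qM q qM) + 2 * (hL b0 b0L a1 a1L p pL)) / 2
  have b1a1q : T b1 a1 q = 0 := by
    linear_combination (norm := ((try simp only [h12, h23, map_add, LinearMap.add_apply]); ring))
      a1pq - (d1 a1 - l0 a1 - (hM a1 a1M q qM q qM) + 2 * (hL b1 b1L a1 a1L p pL)) / 2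
  have pqw : ∀ i, T p q (w i) = 0 := fun i => by
    linear_combination (norm := ((try simp only [h12, h23, map_add, LinearMap.add_apply]); ring))
      (hN _ rN _ rN _ (wN i) - l0 (w i) - hM _ qM _ qM _ (wM i)) / 2
  have qpw : ∀ i, T q p (w i) = 0 := fun i => by rw [h12, pqw]
  -- A pair annihilating everything does so in every position of the three arguments.
  have perm : ∀ {x y : V}, (∀ v, T x y v = 0) → (∀ v, T x v y = 0) ∧ ∀ v, T v x y = 0 := fun h =>
    ⟨fun v => by rw [h23]; exact h v, fun v => by rw [h12, h23]; exact h v⟩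
  have Lm : ∀ x ∈ L, ∀ y ∈ L, ∀ z ∈ L, T x y z = 0 := hL
  have Mm : ∀ x ∈ M, ∀ y ∈ M, ∀ z ∈ M, T x y z = 0 := hM
  refine SymTri.eq_zero_of_span ⟨T, h12, h23⟩ _
    (Sum.elim (fun i : Fin 9 => i.val) fun _ => 9) hspan ?_
  -- The `w i` have the largest rank, so in a sorted triple they come last.
  rintro (i | i) (j | j) (k | k) hij hjk
  · revert i j k
    simp [Fin.forall_fin_succ, c00, c01, c02, c11, c12, c22, b00, b01, b11, a00, a01, a11, c0a0,
      c0a1, c1a0, c1a1, c2b0, c2b1, l0,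
      perm c00, perm c01, perm c02, perm c11, perm c12, perm c22, perm b00, perm b01, perm b11,
      perm a00, perm a01, perm a11, perm c0a0, perm c0a1, perm c1a0, perm c1a1, perm c2b0,
      perm c2b1, perm l0,
      c0b0p, c0b0q, c0b1p, c0b1q, c1b0p, c1b0q, c1b1p, c1b1q, c2a0p, c2a1p, c0pq, c1pq, c2pq, pqq,
      b0pq, b0qq, b1pq, b1qq, a0pq, b0a0q, b1a0q, a1pq, b0a1q, b1a1q, pqw,
      Lm, Mm, b0L, b1L, a0L, a1L, pL, c0M, c1M, c2M, a0M, a1M, qM]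
  · clear hij hjk
    revert i j
    simp [Fin.forall_fin_succ, c00, c01, c02, c11, c12, c22, b00, b01, b11, a00, a01, a11, c0a0,
      c0a1, c1a0, c1a1, c2b0, c2b1, l0,
      fun i v => (perm (c0w i)).1 v, fun i v => (perm (c1w i)).1 v, fun i v => (perm (c2w i)).1 v,
      fun i v => (perm (b0w i)).1 v, fun i v => (perm (b1w i)).1 v, fun i v => (perm (a0w i)).1 v,
      fun i v => (perm (a1w i)).1 v,
      fun i v => (perm (c0w i)).2 v, fun i v => (perm (c1w i)).2 v, fun i v => (perm (c2w i)).2 v,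
      fun i v => (perm (b0w i)).2 v, fun i v => (perm (b1w i)).2 v, fun i v => (perm (a0w i)).2 v,
      fun i v => (perm (a1w i)).2 v,
      pqw, qpw, Lm, Mm, pL, qM, wL, wM]
  · simp at hjk
    omega
  · clear hij hjk
    revert i
    simp [Fin.forall_fin_succ, c0w, c1w, c2w, b0w, b1w, a0w, a1w, Lm, Mm, pL, qM, wL, wM]
  · simp at hij
    omega
  · simp at hij
    omega
  · simp at hjk
    omega
  · exact ww i j _

/-! ### Cubic forms and their third partial derivatives -/

theorem pderiv_comm' {σ : Type*} (i j : σ) (f : MvPolynomial σ ℂ) :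
    pderiv i (pderiv j f) = pderiv j (pderiv i f) := by
  classical
  have h : ⁅pderiv (R := ℂ) i, pderiv j⁆ = 0 := MvPolynomial.derivation_ext fun k => by
    rw [Derivation.commutator_apply, pderiv_X, pderiv_X]
    by_cases hi : k = i <;> by_cases hj : k = j <;> simp [Pi.single_apply, hi, hj, apply_ite]
  have := DFunLike.congr_fun h f
  rwa [Derivation.commutator_apply, Derivation.zero_apply, sub_eq_zero] at this

/-- The array of third partial derivatives of a cubic (constants, hence evaluated at `0`). -/
noncomputable def thirdPartials {n : ℕ} (f : MvPolynomial (Fin n) ℂ)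
    (x : Fin n × Fin n × Fin n) : ℂ :=
  eval 0 (pderiv x.1 (pderiv x.2.1 (pderiv x.2.2 f)))

theorem euler_eval {n d : ℕ} {f : MvPolynomial (Fin n) ℂ} (hf : f.IsHomogeneous d)
    (v : Fin n → ℂ) : ∑ i, v i * eval v (pderiv i f) = d * eval v f := by
  have := congrArg (eval v) hf.sum_X_mul_pderiv
  simpa using this

theorem second_partial {n : ℕ} {f : MvPolynomial (Fin n) ℂ} (hf : f.IsHomogeneous 3)
    (v : Fin n → ℂ) (j k : Fin n) :
    eval v (pderiv j (pderiv k f)) = ∑ i, v i * thirdPartials f (i, j, k) := by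
  have h2 : (pderiv j (pderiv k f)).IsHomogeneous 1 := hf.pderiv.pderiv
  have := euler_eval h2 v
  rw [Nat.cast_one, one_mul] at this
  rw [← this]
  refine Finset.sum_congr rfl fun i _ => ?_
  have h3 : (pderiv i (pderiv j (pderiv k f))).IsHomogeneous 0 := h2.pderiv
  rw [← totalDegree_zero_iff_isHomogeneous, totalDegree_eq_zero_iff_eq_C] at h3
  rw [thirdPartials, h3, eval_C, eval_C]

theorem first_partial {n : ℕ} {f : MvPolynomial (Fin n) ℂ} (hf : f.IsHomogeneous 3)
    (v : Fin n → ℂ) (k : Fin n) :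
    2 * eval v (pderiv k f) = ∑ i, ∑ j, v i * v j * thirdPartials f (i, j, k) := by
  have h1 : (pderiv k f).IsHomogeneous 2 := hf.pderiv
  have := euler_eval h1 v
  rw [Nat.cast_ofNat] at this
  rw [← this, Finset.sum_comm]
  refine Finset.sum_congr rfl fun j _ => ?_
  rw [second_partial hf, Finset.mul_sum]
  exact Finset.sum_congr rfl fun i _ => by ring

theorem value_eq {n : ℕ} {f : MvPolynomial (Fin n) ℂ} (hf : f.IsHomogeneous 3)
    (v : Fin n → ℂ) :
    6 * eval v f = ∑ i, ∑ j, ∑ k, v i * v j * v k * thirdPartials f (i, j, k) := by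
  have := euler_eval hf v
  rw [Nat.cast_ofNat] at this
  have e : 6 * eval v f = ∑ k, v k * (2 * eval v (pderiv k f)) := by
    rw [show (6 : ℂ) * eval v f = 2 * (3 * eval v f) by ring, ← this, Finset.mul_sum]
    exact Finset.sum_congr rfl fun i _ => by ring
  rw [e]
  simp_rw [first_partial hf, Finset.mul_sum]
  rw [Finset.sum_comm]
  refine Finset.sum_congr rfl fun i _ => ?_
  rw [Finset.sum_comm]
  exact Finset.sum_congr rfl fun j _ => Finset.sum_congr rfl fun k _ => by ring

theorem eq_zero_of_thirdPartials {n : ℕ} {f : MvPolynomial (Fin n) ℂ} (hf : f.IsHomogeneous 3)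
    (h : thirdPartials f = 0) : f = 0 := by
  refine MvPolynomial.funext fun v => ?_
  have := value_eq hf v
  simpa [h] using this

/-! ### Nondegeneracy of a linear system is an open condition -/

/-- If a homogeneous linear system whose coefficients are polynomials in parameters `t` has only the
zero solution at `t₀`, then so it does wherever a suitable polynomial, nonzero at `t₀`, does not
vanish. The number of equations may be infinite; the polynomial is a maximal minor. -/
theorem generic_of_special {ι κ R : Type*} [Fintype κ]
    (φ : R → κ → MvPolynomial ι ℂ) (t₀ : ι → ℂ)
    (h₀ : ∀ c : κ → ℂ, (∀ r, ∑ k, eval t₀ (φ r k) * c k = 0) → c = 0) :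
    ∃ F : MvPolynomial ι ℂ, eval t₀ F ≠ 0 ∧ ∀ t, eval t F ≠ 0 →
      ∀ c : κ → ℂ, (∀ r, ∑ k, eval t (φ r k) * c k = 0) → c = 0 := by
  classical
  -- The rows at `t₀` span: a functional killing all of them is a solution of the system.
  have hspan : Submodule.span ℂ (Set.range fun r k => eval t₀ (φ r k)) = ⊤ := by
    by_contra h
    obtain ⟨g, hg, hle⟩ := Submodule.exists_le_ker_of_lt_top _ (lt_top_iff_ne_top.2 h)
    refine hg ?_
    have := h₀ (fun k => g (Pi.single k 1)) fun r => by
      have h1 := LinearMap.mem_ker.1 (hle (Submodule.subset_span ⟨r, rfl⟩))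
      rw [LinearMap.pi_apply_eq_sum_univ g] at h1
      refine (Finset.sum_congr rfl fun k _ => ?_).trans h1
      rw [smul_eq_mul]
      congr 2
      ext j
      simp [Pi.single_apply, eq_comm]
    refine LinearMap.pi_ext' fun k => LinearMap.ext_ring ?_
    simpa using congrFun this k
  -- Choose a basis among the rows; the corresponding square submatrix has a nonzero determinant.
  obtain ⟨κ', a, -, ha, hli⟩ := exists_linearIndependent' ℂ fun r k => eval t₀ (φ r k)
  let b := Module.Basis.mk hli (by rw [ha, hspan])
  let e : κ ≃ κ' := (Pi.basisFun ℂ κ).indexEquiv b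
  let A : Matrix κ κ (MvPolynomial ι ℂ) := Matrix.of fun i k => φ (a (e i)) k
  have hev : ∀ t, eval t A.det = (Matrix.of fun i k => eval t (φ (a (e i)) k)).det := fun t => by
    rw [RingHom.map_det]; rfl
  refine ⟨A.det, ?_, fun t ht c hc => ?_⟩
  · rw [hev, ← isUnit_iff_ne_zero, ← Matrix.isUnit_iff_isUnit_det,
      ← Matrix.linearIndependent_rows_iff_isUnit]
    exact hli.comp e e.injective
  · rw [hev] at ht
    exact Matrix.eq_zero_of_mulVec_eq_zero ht (funext fun i => hc (a (e i)))

/-! ### Cubics of a configuration as trilinear forms -/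

/-- The cubic form with coefficient array `c`. -/
noncomputable def cub {N : ℕ} (c : Fin N × Fin N × Fin N → ℂ) (x : Fin N → ℂ) : ℂ :=
  ∑ i, ∑ j, ∑ k, x i * x j * x k * c (i, j, k)

/-- The quadratic form `c(x, x, eₘ)`. -/
noncomputable def quad {N : ℕ} (c : Fin N × Fin N × Fin N → ℂ) (x : Fin N → ℂ) (m : Fin N) : ℂ :=
  ∑ i, ∑ j, x i * x j * c (i, j, m)

/-- The only symmetric array `c` whose cubic form vanishes on the column spaces of `A`, `B 0`, `B 1`
and is singular at the points `l s`, `m k s` is zero. -/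
def Rigid {n : ℕ} (A : Matrix (Fin (n + 1)) (Fin (n - 3)) ℂ)
    (B : Fin 2 → Matrix (Fin (n + 1)) (Fin (n - 2)) ℂ)
    (l : Fin 3 → Fin (n + 1) → ℂ) (m : Fin 2 → Fin 4 → Fin (n + 1) → ℂ) : Prop :=
  ∀ c : Fin (n + 1) × Fin (n + 1) × Fin (n + 1) → ℂ,
    (∀ i j k, c (i, j, k) = c (j, i, k)) → (∀ i j k, c (i, j, k) = c (i, k, j)) →
    (∀ u, cub c (A.mulVec u) = 0) → (∀ k u, cub c ((B k).mulVec u) = 0) →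
    (∀ s i, quad c (l s) i = 0) → (∀ k s i, quad c (m k s) i = 0) → c = 0

theorem Rigid.eq_zero {n : ℕ} {A : Matrix (Fin (n + 1)) (Fin (n - 3)) ℂ}
    {B : Fin 2 → Matrix (Fin (n + 1)) (Fin (n - 2)) ℂ}
    {l : Fin 3 → Fin (n + 1) → ℂ} {m : Fin 2 → Fin 4 → Fin (n + 1) → ℂ} (h : Rigid A B l m)
    {f : MvPolynomial (Fin (n + 1)) ℂ}
    (hf : f ∈ SingSpace n 3 (Set.range l ∪ Set.range (m 0) ∪ Set.range (m 1))
      (Set.range A.mulVec ∪ Set.range (B 0).mulVec ∪ Set.range (B 1).mulVec)) : f = 0 := by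
  simp only [SingSpace, Submodule.mem_inf, Submodule.mem_iInf, LinearMap.mem_ker, evalPDeriv,
    evalAt, LinearMap.comp_apply, mem_homogeneousSubmodule, AlgHom.toLinearMap_apply,
    Derivation.coeFn_coe] at hf
  obtain ⟨⟨hom, hv⟩, hs⟩ := hf
  have v0 : ∀ v ∈ (Set.range A.mulVec ∪ Set.range (B 0).mulVec ∪ Set.range (B 1).mulVec),
      cub (thirdPartials f) v = 0 := fun v hm => by
    have e : eval v f = 0 := hv v hm
    rw [cub, ← value_eq hom, e, mul_zero]
  have s0 : ∀ v ∈ Set.range l ∪ Set.range (m 0) ∪ Set.range (m 1), ∀ k,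
      quad (thirdPartials f) v k = 0 := fun v hm k => by
    have e : eval v (pderiv k f) = 0 := hs v hm k
    rw [quad, ← first_partial hom, e, mul_zero]
  refine eq_zero_of_thirdPartials hom (h _ (fun i j k => ?_) (fun i j k => ?_) (fun u => ?_)
    (fun k u => ?_) (fun s => ?_) fun k s => ?_)
  · simp only [thirdPartials, pderiv_comm' i j]
  · simp only [thirdPartials, pderiv_comm' j k]
  · exact v0 _ (by simp)
  · exact v0 _ (by fin_cases k <;> simp)
  · exact s0 _ (by simp)
  · exact s0 _ (by fin_cases k <;> simp)

/-- Polarisation. -/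
theorem SymTri.van_of_cube {V : Type} [AddCommGroup V] [Module ℂ V] (S : SymTri V)
    {L : Submodule ℂ V} (hL : ∀ x ∈ L, S.T x x x = 0) : S.Van L := by
  obtain ⟨T, h12, h23⟩ := S
  intro u hu v hv w hw
  have e0 := hL _ (add_mem (add_mem hu hv) hw)
  have e1 := hL _ (add_mem hu hv)
  have e2 := hL _ (add_mem hu hw)
  have e3 := hL _ (add_mem hv hw)
  simp only [map_add, LinearMap.add_apply] at e0 e1 e2 e3
  linear_combination (norm := ((simp only [h12, h23]); ring))
    (e0 - e1 - e2 - e3 + hL _ hu + hL _ hv + hL _ hw) / 6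

theorem Rigid.of_symTri {n : ℕ} {A : Matrix (Fin (n + 1)) (Fin (n - 3)) ℂ}
    {B : Fin 2 → Matrix (Fin (n + 1)) (Fin (n - 2)) ℂ}
    {l : Fin 3 → Fin (n + 1) → ℂ} {m : Fin 2 → Fin 4 → Fin (n + 1) → ℂ}
    (h : ∀ S : SymTri (Fin (n + 1) → ℂ),
      S.Van (LinearMap.range A.mulVecLin) → (∀ k, S.Van (LinearMap.range (B k).mulVecLin)) →
      (∀ s v, S.T (l s) (l s) v = 0) → (∀ k s v, S.T (m k s) (m k s) v = 0) → S.T = 0) :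
    Rigid A B l m := by
  intro c c12 c23 cA cB cl cm
  let pr (i : Fin (n + 1)) : (Fin (n + 1) → ℂ) →ₗ[ℂ] ℂ := LinearMap.proj i
  let T : (Fin (n + 1) → ℂ) →ₗ[ℂ] (Fin (n + 1) → ℂ) →ₗ[ℂ] (Fin (n + 1) → ℂ) →ₗ[ℂ] ℂ :=
    ∑ i, ∑ j, ∑ k, c (i, j, k) • (pr i).smulRight ((pr j).smulRight (pr k))
  have hT : ∀ x y z, T x y z = ∑ i, ∑ j, ∑ k, c (i, j, k) * (x i * (y j * z k)) := fun x y z => by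
    simp [T, pr, LinearMap.sum_apply]
  let S : SymTri (Fin (n + 1) → ℂ) := ⟨T, fun u v w => by
    rw [hT, hT, Finset.sum_comm]
    refine Finset.sum_congr rfl fun i _ => Finset.sum_congr rfl fun j _ =>
      Finset.sum_congr rfl fun k _ => ?_
    rw [c12]
    ring, fun u v w => by
    rw [hT, hT]
    refine Finset.sum_congr rfl fun i _ => ?_
    rw [Finset.sum_comm]
    refine Finset.sum_congr rfl fun j _ => Finset.sum_congr rfl fun k _ => ?_
    rw [c23]
    ring⟩
  have hcub : ∀ x, T x x x = cub c x := fun x => by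
    rw [hT, cub]
    exact Finset.sum_congr rfl fun i _ => Finset.sum_congr rfl fun j _ =>
      Finset.sum_congr rfl fun k _ => by ring
  have hquad : ∀ x v, T x x v = ∑ k, v k * quad c x k := fun x v => by
    simp_rw [hT, quad, Finset.mul_sum]
    symm
    rw [Finset.sum_comm]
    refine Finset.sum_congr rfl fun i _ => ?_
    rw [Finset.sum_comm]
    exact Finset.sum_congr rfl fun j _ => Finset.sum_congr rfl fun k _ => by ring
  have hvan : ∀ L : Submodule ℂ (Fin (n + 1) → ℂ), (∀ x ∈ L, cub c x = 0) → S.Van L :=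
    fun L hL => S.van_of_cube fun x hx => (hcub x).trans (hL x hx)
  have hS : T = 0 := h S
    (hvan _ (by rintro _ ⟨u, rfl⟩; exact cA u))
    (fun k => hvan _ (by rintro _ ⟨u, rfl⟩; exact cB k u))
    (fun s v => (hquad _ _).trans (by simp [cl])) (fun k s v => (hquad _ _).trans (by simp [cm]))
  ext ⟨i, j, k⟩
  have := hT (Pi.single i 1) (Pi.single j 1) (Pi.single k 1)
  simpa [hS, Pi.single_apply] using this.symm

/-! ### From one configuration to the generic one -/

/-- Index set of the parameters of a configuration: entries of the three matrices and
coefficients of the eleven points. -/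
abbrev Param (n : ℕ) : Type :=
  (Fin (n + 1) × Fin (n - 3)) ⊕ (Fin 2 × Fin (n + 1) × Fin (n - 2)) ⊕
    (Fin 3 × Fin (n - 3)) ⊕ (Fin 2 × Fin 4 × Fin (n - 2))

section
variable {n : ℕ} (t : Param n → ℂ)

/-- The matrix whose column span is `L`. -/
abbrev matA : Matrix (Fin (n + 1)) (Fin (n - 3)) ℂ := Matrix.of fun i j => t (Sum.inl (i, j))

/-- The matrices whose column spans are `M` (for `k = 0`) and `N` (for `k = 1`). -/
abbrev matB (k : Fin 2) : Matrix (Fin (n + 1)) (Fin (n - 2)) ℂ :=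
  Matrix.of fun i j => t (Sum.inr (Sum.inl (k, i, j)))

/-- The three points on `L`. -/
abbrev ptA (s : Fin 3) : Fin (n + 1) → ℂ :=
  (matA t).mulVec fun j => t (Sum.inr (Sum.inr (Sum.inl (s, j))))

/-- The four points on `M` (for `k = 0`) and on `N` (for `k = 1`). -/
abbrev ptB (k : Fin 2) (s : Fin 4) : Fin (n + 1) → ℂ :=
  (matB t k).mulVec fun j => t (Sum.inr (Sum.inr (Sum.inr (k, s, j))))

end

/-- Index set of the coefficients of a trilinear form on `ℂ^(n+1)`. -/
abbrev Triple (n : ℕ) : Type := Fin (n + 1) × Fin (n + 1) × Fin (n + 1)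

/-- Rigidity is an open condition on the parameters. -/
theorem exists_poly_rigid {n : ℕ} (t₀ : Param n → ℂ)
    (h : Rigid (matA t₀) (matB t₀) (ptA t₀) (ptB t₀)) :
    ∃ F : MvPolynomial (Param n) ℂ, eval t₀ F ≠ 0 ∧ ∀ t, eval t F ≠ 0 →
      Rigid (matA t) (matB t) (ptA t) (ptB t) := by
  classical
  -- Rows of the linear system that defines `Rigid`, with entries polynomial in the parameters:
  -- vanishing at `x`, singularity at `x` in the direction `m`, and symmetry of the array.
  let cubRow (x : Fin (n + 1) → MvPolynomial (Param n) ℂ) : Triple n → MvPolynomial (Param n) ℂ :=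
    fun k => x k.1 * x k.2.1 * x k.2.2
  let quadRow (x : Fin (n + 1) → MvPolynomial (Param n) ℂ) (m : Fin (n + 1)) :
      Triple n → MvPolynomial (Param n) ℂ := fun k => x k.1 * x k.2.1 * if k.2.2 = m then 1 else 0
  let symRow (a b : Triple n) : Triple n → MvPolynomial (Param n) ℂ :=
    fun k => (if k = a then 1 else 0) - if k = b then 1 else 0
  have eval_cub : ∀ x t (c : Triple n → ℂ),
      ∑ k, eval t (cubRow x k) * c k = cub c fun i => eval t (x i) := fun x t c => by
    simp [cubRow, cub, Fintype.sum_prod_type]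
  have eval_quad : ∀ x m t (c : Triple n → ℂ),
      ∑ k, eval t (quadRow x m k) * c k = quad c (fun i => eval t (x i)) m := fun x m t c => by
    simp only [quadRow, quad, Fintype.sum_prod_type, apply_ite (eval t), map_mul, map_zero,
      mul_ite, mul_one, mul_zero, ite_mul, zero_mul, Finset.sum_ite_eq',
      Finset.mem_univ, if_true]
  have eval_sym : ∀ a b t (c : Triple n → ℂ),
      ∑ k, eval t (symRow a b k) * c k = c a - c b := fun a b t c => by
    simp only [symRow, map_sub, apply_ite (eval t), map_one, map_zero, sub_mul, ite_mul, one_mul,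
      zero_mul, Finset.sum_sub_distrib, Finset.sum_ite_eq', Finset.mem_univ, if_true]
  -- Generic points: with constant coefficients (`vA`, `vB`, sweeping out the subspaces) and with
  -- parameters as coefficients (`wA`, `wB`, the points of the configuration).
  let vA (u : Fin (n - 3) → ℂ) (i : Fin (n + 1)) : MvPolynomial (Param n) ℂ :=
    ∑ j, X (Sum.inl (i, j)) * C (u j)
  let vB (k : Fin 2) (u : Fin (n - 2) → ℂ) (i : Fin (n + 1)) : MvPolynomial (Param n) ℂ :=
    ∑ j, X (Sum.inr (Sum.inl (k, i, j))) * C (u j)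
  let wA (s : Fin 3) (i : Fin (n + 1)) : MvPolynomial (Param n) ℂ :=
    ∑ j, X (Sum.inl (i, j)) * X (Sum.inr (Sum.inr (Sum.inl (s, j))))
  let wB (k : Fin 2) (s : Fin 4) (i : Fin (n + 1)) : MvPolynomial (Param n) ℂ :=
    ∑ j, X (Sum.inr (Sum.inl (k, i, j))) * X (Sum.inr (Sum.inr (Sum.inr (k, s, j))))
  have evA : ∀ u t, (fun i => eval t (vA u i)) = (matA t).mulVec u := fun u t => by
    ext i; simp [vA, Matrix.mulVec, dotProduct]
  have evB : ∀ k u t, (fun i => eval t (vB k u i)) = (matB t k).mulVec u := fun k u t => by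
    ext i; simp [vB, Matrix.mulVec, dotProduct]
  have ewA : ∀ s t, (fun i => eval t (wA s i)) = ptA t s := fun s t => by
    ext i; simp [wA, Matrix.mulVec, dotProduct]
  have ewB : ∀ k s t, (fun i => eval t (wB k s i)) = ptB t k s := fun k s t => by
    ext i; simp [wB, Matrix.mulVec, dotProduct]
  let φ := Sum.elim (fun x : Triple n => symRow x (x.2.1, x.1, x.2.2)) <|
    Sum.elim (fun x : Triple n => symRow x (x.1, x.2.2, x.2.1)) <|
    Sum.elim (fun u => cubRow (vA u)) <|
    Sum.elim (fun u : Fin 2 × (Fin (n - 2) → ℂ) => cubRow (vB u.1 u.2)) <|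
    Sum.elim (fun u : Fin 3 × Fin (n + 1) => quadRow (wA u.1) u.2)
      (fun u : Fin 2 × Fin 4 × Fin (n + 1) => quadRow (wB u.1 u.2.1) u.2.2)
  have key : ∀ t, (∀ c : Triple n → ℂ, (∀ r, ∑ k, eval t (φ r k) * c k = 0) → c = 0) ↔
      Rigid (matA t) (matB t) (ptA t) (ptB t) := fun t => by
    refine forall_congr' fun c => ?_
    simp only [φ, Sum.forall, Sum.elim_inl, Sum.elim_inr, eval_cub, eval_quad, eval_sym, evA, evB,
      ewA, ewB, sub_eq_zero, and_imp, Prod.forall]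
  obtain ⟨F, h1, h2⟩ := generic_of_special φ t₀ ((key t₀).2 h)
  exact ⟨F, h1, fun t ht => (key t).1 (h2 t ht)⟩

/-- Injectivity of a matrix of parameters is an open condition. -/
theorem exists_poly_injective {ι : Type*} {n k : ℕ} (g : Fin n → Fin k → ι) (t₀ : ι → ℂ)
    (h : Function.Injective (Matrix.of fun i j => t₀ (g i j)).mulVec) :
    ∃ F : MvPolynomial ι ℂ, eval t₀ F ≠ 0 ∧ ∀ t, eval t F ≠ 0 →
      Function.Injective (Matrix.of fun i j => t (g i j)).mulVec := by
  have key : ∀ t : ι → ℂ, (∀ c : Fin k → ℂ,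
      (∀ i, ∑ j, eval t (X (g i j) : MvPolynomial ι ℂ) * c j = 0) → c = 0) ↔
      Function.Injective (Matrix.of fun i j => t (g i j)).mulVec := fun t => by
    rw [← Matrix.coe_mulVecLin, injective_iff_map_eq_zero]
    refine forall_congr' fun c => ?_
    simp [funext_iff, Matrix.mulVec, dotProduct]
  obtain ⟨F, h1, h2⟩ := generic_of_special _ t₀ ((key t₀).2 h)
  exact ⟨F, h1, fun t ht => (key t).1 (h2 t ht)⟩

theorem generic_of_rigid {n : ℕ} (t₀ : Param n → ℂ) (hA : Function.Injective (matA t₀).mulVec)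
    (hB : ∀ k, Function.Injective (matB t₀ k).mulVec)
    (h : Rigid (matA t₀) (matB t₀) (ptA t₀) (ptB t₀)) :
    Generic fun t : Param n → ℂ => Function.Injective (matA t).mulVec ∧
      (∀ k, Function.Injective (matB t k).mulVec) ∧
      Rigid (matA t) (matB t) (ptA t) (ptB t) := by
  obtain ⟨F, hF, hF'⟩ := exists_poly_rigid t₀ h
  obtain ⟨G, hG, hG'⟩ := exists_poly_injective _ t₀ hA
  choose H hH hH' using fun k => exists_poly_injective _ t₀ (hB k)
  refine ⟨F * G * (H 0 * H 1), fun h0 => ?_, fun t ht => ?_⟩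
  · have := congrArg (eval t₀) h0
    simp [hF, hG, hH] at this
  · simp only [map_mul, mul_ne_zero_iff] at ht
    refine ⟨hG' t ht.1.2, fun k => hH' k t ?_, hF' t ht.1.1⟩
    fin_cases k
    exacts [ht.2.1, ht.2.2]

/-- Pullback of a symmetric trilinear form along a linear map. -/
def SymTri.comap {V W : Type} [AddCommGroup V] [Module ℂ V] [AddCommGroup W] [Module ℂ W]
    (S : SymTri W) (e : V →ₗ[ℂ] W) : SymTri V where
  T := (S.T.compl₁₂ e e).compr₂ (LinearMap.lcomp ℂ ℂ e)
  h12 _ _ _ := S.h12 _ _ _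
  h23 _ _ _ := S.h23 _ _ _

/-- One configuration in an abstract vector space `V` of dimension `n + 1`, with the subspaces given
as ranges of injective linear maps, is enough for genericity: choosing bases turns it into a
parameter value at which the linear system has only the zero solution. -/
theorem generic_of_config {n : ℕ} {V P Q : Type} [AddCommGroup V] [Module ℂ V] [AddCommGroup P]
    [Module ℂ P] [AddCommGroup Q] [Module ℂ Q] [FiniteDimensional ℂ V] [FiniteDimensional ℂ P]
    [FiniteDimensional ℂ Q]
    (dV : Module.finrank ℂ V = n + 1) (dP : Module.finrank ℂ P = n - 3)
    (dQ : Module.finrank ℂ Q = n - 2)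
    (φ : P →ₗ[ℂ] V) (ψ : Fin 2 → Q →ₗ[ℂ] V) (hφ : Function.Injective φ)
    (hψ : ∀ k, Function.Injective (ψ k)) (l : Fin 3 → V) (m : Fin 2 → Fin 4 → V)
    (hl : ∀ s, l s ∈ LinearMap.range φ) (hm : ∀ k s, m k s ∈ LinearMap.range (ψ k))
    (h : ∀ S : SymTri V, S.Van (LinearMap.range φ) → (∀ k, S.Van (LinearMap.range (ψ k))) →
      (∀ s v, S.T (l s) (l s) v = 0) → (∀ k s v, S.T (m k s) (m k s) v = 0) → S.T = 0) :
    Generic fun t : Param n → ℂ => Function.Injective (matA t).mulVec ∧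
      (∀ k, Function.Injective (matB t k).mulVec) ∧
      Rigid (matA t) (matB t) (ptA t) (ptB t) := by
  let e : V ≃ₗ[ℂ] (Fin (n + 1) → ℂ) := LinearEquiv.ofFinrankEq _ _ (by simp [dV])
  let eP : (Fin (n - 3) → ℂ) ≃ₗ[ℂ] P := LinearEquiv.ofFinrankEq _ _ (by simp [dP])
  let eQ : (Fin (n - 2) → ℂ) ≃ₗ[ℂ] Q := LinearEquiv.ofFinrankEq _ _ (by simp [dQ])
  choose x hx using hl
  choose y hy using hm
  let A := LinearMap.toMatrix' (e.toLinearMap ∘ₗ φ ∘ₗ eP.toLinearMap)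
  let B k := LinearMap.toMatrix' (e.toLinearMap ∘ₗ ψ k ∘ₗ eQ.toLinearMap)
  have hA : ∀ u, A.mulVec u = e (φ (eP u)) := fun u => LinearMap.toMatrix'_mulVec _ _
  have hB : ∀ k u, (B k).mulVec u = e (ψ k (eQ u)) := fun k u => LinearMap.toMatrix'_mulVec _ _
  let t₀ : Param n → ℂ := Sum.elim (fun a => A a.1 a.2) <| Sum.elim (fun a => B a.1 a.2.1 a.2.2) <|
    Sum.elim (fun a => eP.symm (x a.1) a.2) fun a => eQ.symm (y a.1 a.2.1) a.2.2
  have hpA : ∀ s, ptA t₀ s = e (l s) := fun s => by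
    change A.mulVec (eP.symm (x s)) = _
    rw [hA, eP.apply_symm_apply, hx]
  have hpB : ∀ k s, ptB t₀ k s = e (m k s) := fun k s => by
    change (B k).mulVec (eQ.symm (y k s)) = _
    rw [hB, eQ.apply_symm_apply, hy]
  refine generic_of_rigid t₀ (fun u v huv => ?_) (fun k u v huv => ?_)
    (Rigid.of_symTri fun S hSA hSB hSl hSm => ?_)
  · change A.mulVec u = A.mulVec v at huv
    rw [hA, hA] at huv
    exact eP.injective (hφ (e.injective huv))
  · change (B k).mulVec u = (B k).mulVec v at huv
    rw [hB, hB] at huv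
    exact eQ.injective (hψ k (e.injective huv))
  · have h0 : (S.comap e.toLinearMap).T = 0 := by
      refine h _ ?_ ?_ (fun s v => ?_) (fun k s v => ?_)
      · have : ∀ z ∈ LinearMap.range φ, e z ∈ LinearMap.range (matA t₀).mulVecLin := by
          rintro _ ⟨z, rfl⟩
          exact ⟨eP.symm z, (hA _).trans (by simp)⟩
        exact fun u hu v hv w hw => hSA _ (this u hu) _ (this v hv) _ (this w hw)
      · intro k
        have : ∀ z ∈ LinearMap.range (ψ k), e z ∈ LinearMap.range (matB t₀ k).mulVecLin := by
          rintro _ ⟨z, rfl⟩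
          exact ⟨eQ.symm z, (hB _ _).trans (by simp)⟩
        exact fun u hu v hv w hw => hSB k _ (this u hu) _ (this v hv) _ (this w hw)
      · have := hSl s (e v)
        rwa [hpA] at this
      · have := hSm k s (e v)
        rwa [hpB] at this
    refine LinearMap.ext fun u => LinearMap.ext fun v => LinearMap.ext fun w => ?_
    have := LinearMap.congr_fun (LinearMap.congr_fun (LinearMap.congr_fun h0 (e.symm u))
      (e.symm v)) (e.symm w)
    change S.T (e (e.symm u)) (e (e.symm v)) (e (e.symm w)) = 0 at this
    simpa using this

/-! ### The special configurations in coordinates -/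

/-- The linear map `(κ → ℂ) → (ι → ℂ)` sending `u` to the vector whose `i`-th coordinate is `u j`
if `σ i = some j` and `0` if `σ i = none`. Its range is spanned by the sums of coordinate vectors
over the fibres of `σ` over the `some j`. -/
def pull {ι κ : Type} (σ : ι → Option κ) : (κ → ℂ) →ₗ[ℂ] (ι → ℂ) where
  toFun u i := (σ i).elim 0 u
  map_add' u v := by ext i; cases h : σ i <;> simp [h]
  map_smul' a u := by ext i; cases h : σ i <;> simp [h]

theorem pull_apply {ι κ : Type} (σ : ι → Option κ) (u : κ → ℂ) (i : ι) :
    pull σ u i = (σ i).elim 0 u := rfl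

theorem pull_injective {ι κ : Type} (σ : ι → Option κ) (h : ∀ j, ∃ i, σ i = some j) :
    Function.Injective (pull σ) := fun u v huv => by
  ext j
  obtain ⟨i, hi⟩ := h j
  simpa [pull_apply, hi] using congrFun huv i

theorem mem_pull {ι κ : Type} {σ : ι → Option κ} {v : ι → ℂ} (u : κ → ℂ)
    (h : ∀ i, (σ i).elim 0 u = v i) : v ∈ LinearMap.range (pull σ) := ⟨u, funext h⟩

theorem span_single {ι : Type} [Fintype ι] [DecidableEq ι] :
    Submodule.span ℂ (Set.range fun i : ι => (Pi.single i 1 : ι → ℂ)) = ⊤ := by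
  convert (Pi.basisFun ℂ ι).span_eq
  simp

/-- In coordinates, the three `p`s of `core6` come first, then the three `q`s, then `h`. -/
theorem generic_six :
    Generic fun t : Param 6 → ℂ => Function.Injective (matA t).mulVec ∧
      (∀ k, Function.Injective (matB t k).mulVec) ∧
      Rigid (matA t) (matB t) (ptA t) (ptB t) := by
  let e (i : Fin 7) : Fin 7 → ℂ := Pi.single i 1
  let p : Fin 3 → Fin 7 → ℂ := ![e 0, e 1, e 2]
  let q : Fin 3 → Fin 7 → ℂ := ![e 3, e 4, e 5]
  let σL : Fin 7 → Option (Fin 3) := ![some 0, some 1, some 2, none, none, none, none]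
  let σ : Fin 2 → Fin 7 → Option (Fin 4) :=
    ![![none, none, none, some 0, some 1, some 2, some 3],
      ![some 0, some 1, some 2, some 0, some 1, some 2, some 3]]
  have pL : ∀ i, p i ∈ LinearMap.range (pull σL) := fun i =>
    mem_pull (Pi.single i 1) fun k => by fin_cases i <;> fin_cases k <;> simp [σL, p, e]
  have qM : ∀ i, q i ∈ LinearMap.range (pull (σ 0)) := fun i =>
    mem_pull (Pi.single i.castSucc 1) fun k => by
      fin_cases i <;> fin_cases k <;> simp [σ, q, e]
  have hM : e 6 ∈ LinearMap.range (pull (σ 0)) :=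
    mem_pull (Pi.single 3 1) fun k => by fin_cases k <;> simp [σ, e]
  have rN : ∀ i, p i + q i ∈ LinearMap.range (pull (σ 1)) := fun i =>
    mem_pull (Pi.single i.castSucc 1) fun k => by
      fin_cases i <;> fin_cases k <;> simp [σ, p, q, e]
  have hN : e 6 ∈ LinearMap.range (pull (σ 1)) :=
    mem_pull (Pi.single 3 1) fun k => by fin_cases k <;> simp [σ, e]
  have hspan : Submodule.span ℂ (Set.range (Sum.elim p (Sum.elim q fun _ : Unit => e 6))) = ⊤ := by
    rw [eq_top_iff, ← span_single, Submodule.span_le]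
    rintro _ ⟨i, rfl⟩
    refine Submodule.subset_span ?_
    fin_cases i
    exacts [⟨Sum.inl 0, rfl⟩, ⟨Sum.inl 1, rfl⟩, ⟨Sum.inl 2, rfl⟩, ⟨Sum.inr (Sum.inl 0), rfl⟩,
      ⟨Sum.inr (Sum.inl 1), rfl⟩, ⟨Sum.inr (Sum.inl 2), rfl⟩, ⟨Sum.inr (Sum.inr ()), rfl⟩]
  refine generic_of_config (by simp) (by simp) (by simp) (pull σL) (fun k => pull (σ k))
    (pull_injective _ (by decide)) (fun k => pull_injective _ (by revert k; decide))
    ![p 1 + p 2, p 1 - p 2, p 0 - p 2]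
    ![![q 0, q 1, q 0 + e 6, q 1 + e 6],
      ![p 2 + q 2, p 0 + q 0 + (p 1 + q 1), p 0 + q 0 - (p 1 + q 1),
        p 0 + q 0 - (p 1 + q 1) + (p 2 + q 2)]] ?_ ?_
    fun S hL hMN hl hm => core6 S _ _ _ hL (hMN 0) (hMN 1) p q (e 6) hspan pL qM rN hM hN
      (hl 0) (hl 1) (hl 2) (hm 0 0) (hm 0 1) (hm 0 2) (hm 0 3) (hm 1 0) (hm 1 1) (hm 1 2) (hm 1 3)
  · simp only [Fin.forall_fin_succ, IsEmpty.forall_iff, and_true]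
    exact ⟨add_mem (pL 1) (pL 2), sub_mem (pL 1) (pL 2), sub_mem (pL 0) (pL 2)⟩
  · simp only [Fin.forall_fin_succ, IsEmpty.forall_iff, and_true]
    exact ⟨⟨qM 0, qM 1, add_mem (qM 0) hM, add_mem (qM 1) hM⟩, rN 2, add_mem (rN 0) (rN 1),
      sub_mem (rN 0) (rN 1), add_mem (sub_mem (rN 0) (rN 1)) (rN 2)⟩

/-- The coordinate vectors are the basis vectors of `core7`, in the order listed there. -/
theorem generic_seven :
    Generic fun t : Param 7 → ℂ => Function.Injective (matA t).mulVec ∧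
      (∀ k, Function.Injective (matB t k).mulVec) ∧
      Rigid (matA t) (matB t) (ptA t) (ptB t) := by
  let e (i : Fin 8) : Fin 8 → ℂ := Pi.single i 1
  let σL : Fin 8 → Option (Fin 4) :=
    ![none, none, some 0, some 1, some 2, some 3, none, none]
  let σ : Fin 2 → Fin 8 → Option (Fin 5) :=
    ![![some 0, some 1, none, some 2, none, none, some 3, some 4],
      ![some 0, some 1, some 2, none, some 3, some 4, some 3, some 4]]
  have L : ∀ i : Fin 4, ![e 2, e 3, e 4, e 5] i ∈ LinearMap.range (pull σL) := fun i =>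
    mem_pull (Pi.single i 1) fun k => by fin_cases i <;> fin_cases k <;> simp [σL, e]
  have M : ∀ i : Fin 5, ![e 0, e 1, e 3, e 6, e 7] i ∈ LinearMap.range (pull (σ 0)) := fun i =>
    mem_pull (Pi.single i 1) fun k => by fin_cases i <;> fin_cases k <;> simp [σ, e]
  have N : ∀ i : Fin 5, ![e 0, e 1, e 2, e 4 + e 6, e 5 + e 7] i ∈ LinearMap.range (pull (σ 1)) :=
    fun i => mem_pull (Pi.single i 1) fun k => by fin_cases i <;> fin_cases k <;> simp [σ, e]
  have hspan : Submodule.span ℂ (Set.range ![e 0, e 1, e 2, e 3, e 4, e 5, e 6, e 7]) = ⊤ := by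
    convert span_single (ι := Fin 8)
    rename_i i
    fin_cases i <;> rfl
  refine generic_of_config (by simp) (by simp) (by simp) (pull σL) (fun k => pull (σ k))
    (pull_injective _ (by decide)) (fun k => pull_injective _ (by revert k; decide))
    ![e 4 + e 5, e 4 - e 5, e 4 + e 5 + e 3 + e 2]
    ![![e 6, e 0 + e 6, e 6 + e 3, e 0 + e 6 + e 3],
      ![e 5 + e 7, e 1 + (e 5 + e 7), e 5 + e 7 + e 2, e 1 + (e 5 + e 7) + e 2]] ?_ ?_
    fun S hL hMN hl hm => core7 S _ _ _ hL (hMN 0) (hMN 1) _ _ _ _ _ _ _ _ hspan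
      (L 0) (L 1) (L 2) (L 3) (M 0) (M 1) (M 2) (M 3) (M 4) (N 0) (N 1) (N 2) (N 3) (N 4)
      (hl 0) (hl 1) (hl 2) (hm 0 0) (hm 0 1) (hm 0 2) (hm 0 3) (hm 1 0) (hm 1 1) (hm 1 2) (hm 1 3)
  · simp only [Fin.forall_fin_succ, IsEmpty.forall_iff, and_true]
    exact ⟨add_mem (L 2) (L 3), sub_mem (L 2) (L 3),
      add_mem (add_mem (add_mem (L 2) (L 3)) (L 1)) (L 0)⟩
  · simp only [Fin.forall_fin_succ, IsEmpty.forall_iff, and_true]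
    exact ⟨⟨M 3, add_mem (M 0) (M 3), add_mem (M 3) (M 2), add_mem (add_mem (M 0) (M 3)) (M 2)⟩,
      N 4, add_mem (N 1) (N 4), add_mem (N 4) (N 2), add_mem (add_mem (N 1) (N 4)) (N 2)⟩

/-- The coordinate vectors indexed by `Fin 9` are the first nine basis vectors of `core8`, in the
order listed there; those indexed by `Fin (n - 8)` are the `w i` and lie in all three subspaces. -/
theorem generic_ge_eight {n : ℕ} (hn : 8 ≤ n) :
    Generic fun t : Param n → ℂ => Function.Injective (matA t).mulVec ∧
      (∀ k, Function.Injective (matB t k).mulVec) ∧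
      Rigid (matA t) (matB t) (ptA t) (ptB t) := by
  let e (i : Fin 9 ⊕ Fin (n - 8)) : Fin 9 ⊕ Fin (n - 8) → ℂ := Pi.single i 1
  let f (i : Fin 9) : Fin 9 ⊕ Fin (n - 8) → ℂ := e (Sum.inl i)
  let w (i : Fin (n - 8)) : Fin 9 ⊕ Fin (n - 8) → ℂ := e (Sum.inr i)
  let σL : Fin 9 → Option (Fin 5) :=
    ![none, none, none, some 0, some 1, some 2, some 3, some 4, none]
  let σ : Fin 2 → Fin 9 → Option (Fin 6) :=
    ![![some 0, some 1, some 2, none, none, some 3, some 4, none, some 5],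
      ![some 0, some 1, some 2, some 3, some 4, none, none, some 5, some 5]]
  -- Extend an index map by the identity on the extra coordinates.
  let ext {d : ℕ} (τ : Fin 9 → Option (Fin d)) :
      Fin 9 ⊕ Fin (n - 8) → Option (Fin d ⊕ Fin (n - 8)) :=
    Sum.elim (fun i => (τ i).map Sum.inl) fun i => some (Sum.inr i)
  have ext_inj : ∀ {d : ℕ} (τ : Fin 9 → Option (Fin d)), (∀ j, ∃ i, τ i = some j) →
      Function.Injective (pull (ext τ)) := fun τ h => pull_injective _ <| by
    rintro (j | j)
    · obtain ⟨i, hi⟩ := h j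
      exact ⟨Sum.inl i, by simp [ext, hi]⟩
    · exact ⟨Sum.inr j, rfl⟩
  have W : ∀ {d : ℕ} (τ : Fin 9 → Option (Fin d)) i, w i ∈ LinearMap.range (pull (ext τ)) :=
    fun τ i => mem_pull (Pi.single (Sum.inr i) 1) <| by
      rintro (k | k)
      · cases h : τ k <;> simp [ext, w, e, h]
      · simp [ext, w, e, Pi.single_apply]
  have L : ∀ i : Fin 5, ![f 3, f 4, f 5, f 6, f 7] i ∈ LinearMap.range (pull (ext σL)) := fun i =>
    mem_pull (Pi.single (Sum.inl i) 1) <| by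
      rintro (k | k)
      · fin_cases i <;> fin_cases k <;> simp [ext, σL, f, e]
      · fin_cases i <;> simp [ext, f, e]
  have M : ∀ i : Fin 6, ![f 0, f 1, f 2, f 5, f 6, f 8] i ∈ LinearMap.range (pull (ext (σ 0))) :=
    fun i => mem_pull (Pi.single (Sum.inl i) 1) <| by
      rintro (k | k)
      · fin_cases i <;> fin_cases k <;> simp [ext, σ, f, e]
      · fin_cases i <;> simp [ext, f, e]
  have N : ∀ i : Fin 6,
      ![f 0, f 1, f 2, f 3, f 4, f 7 + f 8] i ∈ LinearMap.range (pull (ext (σ 1))) :=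
    fun i => mem_pull (Pi.single (Sum.inl i) 1) <| by
      rintro (k | k)
      · fin_cases i <;> fin_cases k <;> simp [ext, σ, f, e]
      · fin_cases i <;> simp [ext, f, e]
  have hspan : Submodule.span ℂ (Set.range
      (Sum.elim ![f 0, f 1, f 2, f 3, f 4, f 5, f 6, f 7, f 8] w)) = ⊤ := by
    convert span_single (ι := Fin 9 ⊕ Fin (n - 8))
    rename_i i
    rcases i with i | i
    · fin_cases i <;> rfl
    · rfl
  refine generic_of_config (by simp; omega) (by simp; omega) (by simp; omega)
    (pull (ext σL)) (fun k => pull (ext (σ k)))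
    (ext_inj _ (by decide)) (fun k => ext_inj _ (by revert k; decide))
    ![f 7, f 3 + f 5 + f 7, f 4 + f 6 + f 7]
    ![![f 0 + f 5, f 0 + f 6, f 1 + f 5, f 1 + f 6],
      ![f 2 + f 3, f 2 + f 4, f 7 + f 8 - f 3, f 7 + f 8 - f 4]] ?_ ?_
    fun S hL hMN hl hm => core8 S _ _ _ hL (hMN 0) (hMN 1) _ _ _ _ _ _ _ _ _ w hspan
      (L 0) (L 1) (L 2) (L 3) (L 4) (W _) (M 0) (M 1) (M 2) (M 3) (M 4) (M 5) (W _)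
      (N 0) (N 1) (N 2) (N 3) (N 4) (N 5) (W _)
      (hl 0) (hl 1) (hl 2) (hm 0 0) (hm 0 1) (hm 0 2) (hm 0 3) (hm 1 0) (hm 1 1) (hm 1 2) (hm 1 3)
  · simp only [Fin.forall_fin_succ, IsEmpty.forall_iff, and_true]
    exact ⟨L 4, add_mem (add_mem (L 0) (L 2)) (L 4), add_mem (add_mem (L 1) (L 3)) (L 4)⟩
  · simp only [Fin.forall_fin_succ, IsEmpty.forall_iff, and_true]
    exact ⟨⟨add_mem (M 0) (M 3), add_mem (M 0) (M 4), add_mem (M 1) (M 3), add_mem (M 1) (M 4)⟩,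
      add_mem (N 2) (N 3), add_mem (N 2) (N 4), sub_mem (N 5) (N 3), sub_mem (N 5) (N 4)⟩

theorem cubics_codim_433 (n : ℕ) (hn : 6 ≤ n) :
    Generic
      (ι := (Fin (n + 1) × Fin (n - 3)) ⊕ (Fin 2 × Fin (n + 1) × Fin (n - 2)) ⊕
        (Fin 3 × Fin (n - 3)) ⊕ (Fin 2 × Fin 4 × Fin (n - 2))) fun t =>
      let AL : Matrix (Fin (n + 1)) (Fin (n - 3)) ℂ := Matrix.of fun i j => t (Sum.inl (i, j))
      let B : Fin 2 → Matrix (Fin (n + 1)) (Fin (n - 2)) ℂ :=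
        fun k => Matrix.of fun i j => t (Sum.inr (Sum.inl (k, i, j)))
      let l : Fin 3 → Fin (n + 1) → ℂ :=
        fun s => AL.mulVec fun j => t (Sum.inr (Sum.inr (Sum.inl (s, j))))
      let mp : Fin 2 → Fin 4 → Fin (n + 1) → ℂ :=
        fun k s => (B k).mulVec fun j => t (Sum.inr (Sum.inr (Sum.inr (k, s, j))))
      let U : Set (Fin (n + 1) → ℂ) :=
        Set.range AL.mulVec ∪ Set.range (B 0).mulVec ∪ Set.range (B 1).mulVec
      let S : Set (Fin (n + 1) → ℂ) := Set.range l ∪ Set.range (mp 0) ∪ Set.range (mp 1)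
      Function.Injective AL.mulVec ∧ (∀ k, Function.Injective (B k).mulVec) ∧
      ∀ f ∈ SingSpace n 3 S U, f = 0 := by
  have h : Generic fun t : Param n → ℂ => Function.Injective (matA t).mulVec ∧
      (∀ k, Function.Injective (matB t k).mulVec) ∧
      Rigid (matA t) (matB t) (ptA t) (ptB t) := by
    obtain rfl | rfl | h8 : n = 6 ∨ n = 7 ∨ 8 ≤ n := by omega
    exacts [generic_six, generic_seven, generic_ge_eight h8]
  obtain ⟨F, hF, h⟩ := h
  refine ⟨F, hF, fun t ht => ?_⟩
  obtain ⟨hA, hB, hr⟩ := h t ht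
  exact ⟨hA, hB, fun f hf => hr.eq_zero hf⟩
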